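/- arXiv:2501.11415 — 8 statements merged into one kernel-verified Lean document; each statement's English description precedes it below -/
import Mathlib

section
/- Let p be a prime, let G be a finite group of order divisible by p, and let S be a Sylow p-subgroup of G. Assume that Ω1(S) ≤ Z(S) and that N_G(S) controls p-fusion in G. Then the Grodal subgroup R of N_G(S) is equal to the subgroup of N_G(S) generated by the sets N_G(S) ∩ O^{p'}(N_G(Q)), where Q ranges over the nontrivial subgroups of Ω1(S). -/
open Subgroup Pointwise

/-- `Ω₁(S)`: the subgroup generated by the elements of `S` of order dividing `p`. -/
def omega1 {G : Type*} [Group G] (p : ℕ) (S : Subgroup G) : Subgroup G :=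
  Subgroup.closure {g : G | g ∈ S ∧ g ^ p = 1}

/-- `O^{p'}(H)`: the subgroup generated by the elements of `H` of `p`-power order. -/
def pResidual {G : Type*} [Group G] (p : ℕ) (H : Subgroup G) : Subgroup G :=
  Subgroup.closure {g : G | g ∈ H ∧ ∃ n : ℕ, g ^ p ^ n = 1}

/-- `H` controls `p`-fusion in `G` with respect to the Sylow `p`-subgroup `S`. -/
def ControlsPFusion {G : Type*} [Group G] (S H : Subgroup G) : Prop :=
  ∀ Q : Subgroup G, Q ≤ S → ∀ g : G, (∀ q ∈ Q, g * q * g⁻¹ ∈ S) →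
    ∃ h ∈ H, ∃ c ∈ Subgroup.centralizer (Q : Set G), g = h * c

/-- The product `g₁ ⋯ g_i` of the first `i` values of the sequence `g₁, g₂, …`. -/
def partialProd {G : Type*} [Group G] (gs : ℕ → G) (i : ℕ) : G :=
  ((List.range i).map fun j => gs (j + 1)).prod

/-- The generators of the Grodal subgroup of `N_G(S)`. -/
def GrodalGenerators {G : Type*} [Group G] (p : ℕ) (S : Subgroup G) : Set G :=
  {g : G | g ∈ Subgroup.normalizer (S : Set G) ∧ ∃ n : ℕ, 1 ≤ n ∧ ∃ Q : ℕ → Subgroup G, ∃ gs : ℕ → G,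
    (∀ i ≤ n, Q i ≠ ⊥ ∧ Q i ≤ S) ∧
    (∀ i, 1 ≤ i → i ≤ n → gs i ∈ pResidual p (Subgroup.normalizer (Q i : Set G))) ∧
    g = partialProd gs n ∧ Q 0 ≤ Q 1 ∧
    (∀ i, 1 ≤ i → i ≤ n - 1 →
      ∀ x ∈ Q 0, (partialProd gs i)⁻¹ * x * partialProd gs i ∈ Q (i + 1))}

/-- The Grodal subgroup `R` of `N_G(S)`. -/
def grodalSubgroup {G : Type*} [Group G] (p : ℕ) (S : Subgroup G) : Subgroup G :=
  Subgroup.closure (GrodalGenerators p S)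

theorem pRes_conj {G : Type*} [Group G] {p : ℕ} {H K : Subgroup G} (r : G)
    (h : ∀ x ∈ H, r * x * r⁻¹ ∈ K) {k : G} (hk : k ∈ pResidual p H) :
    r * k * r⁻¹ ∈ pResidual p K := by
  have : pResidual p H ≤ (pResidual p K).comap (MulAut.conj r).toMonoidHom := by
    unfold pResidual
    rw [Subgroup.closure_le]
    rintro x ⟨hx, n, hn⟩
    refine Subgroup.subset_closure ⟨h x hx, n, ?_⟩
    simp [hn]
  exact this hk

theorem pRes_mono {G : Type*} [Group G] {p : ℕ} {H K : Subgroup G} (h : H ≤ K) :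
    pResidual p H ≤ pResidual p K := by
  unfold pResidual
  exact Subgroup.closure_mono fun x hx => ⟨h hx.1, hx.2⟩

theorem omega1_le {G : Type*} [Group G] {p : ℕ} {H : Subgroup G} : omega1 p H ≤ H := by
  unfold omega1
  rw [Subgroup.closure_le]
  exact fun x hx => hx.1

theorem omega1_mono {G : Type*} [Group G] {p : ℕ} {H K : Subgroup G} (h : H ≤ K) :
    omega1 p H ≤ omega1 p K := by
  unfold omega1
  exact Subgroup.closure_mono fun x hx => ⟨h hx.1, hx.2⟩

theorem omega1_conj {G : Type*} [Group G] {p : ℕ} {H K : Subgroup G} (r : G)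
    (h : ∀ x ∈ H, r * x * r⁻¹ ∈ K) {k : G} (hk : k ∈ omega1 p H) :
    r * k * r⁻¹ ∈ omega1 p K := by
  have : omega1 p H ≤ (omega1 p K).comap (MulAut.conj r).toMonoidHom := by
    unfold omega1
    rw [Subgroup.closure_le]
    rintro x ⟨hx, hn⟩
    refine Subgroup.subset_closure ⟨h x hx, ?_⟩
    simp [hn]
  exact this hk

theorem normalizer_omega1 {G : Type*} [Group G] {p : ℕ} {H : Subgroup G} :
    Subgroup.normalizer (H : Set G) ≤ Subgroup.normalizer (omega1 p H : Set G) := by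
  intro g hg
  have hg' := inv_mem hg
  rw [Subgroup.mem_normalizer_iff] at hg hg' ⊢
  intro x
  refine ⟨fun hx => omega1_conj g (fun y hy => (hg y).1 hy) hx, fun hx => ?_⟩
  have := omega1_conj g⁻¹ (fun y hy => (hg' y).1 hy) hx
  simpa [mul_assoc] using this

theorem omega1_ne_bot {G : Type*} [Group G] [Finite G] {p : ℕ} [Fact p.Prime] {S H : Subgroup G}
    (hS : IsPGroup p S) (hH : H ≤ S) (hne : H ≠ ⊥) : omega1 p H ≠ ⊥ := by
  have hP : IsPGroup p H := hS.to_le hH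
  have : Nontrivial H := (Subgroup.nontrivial_iff_ne_bot H).2 hne
  obtain ⟨n, hn, hc⟩ := hP.nontrivial_iff_card.1 this
  obtain ⟨x, hx⟩ := exists_prime_orderOf_dvd_card' (G := H) p
    (by rw [hc]; exact dvd_pow_self p hn.ne')
  intro hb
  have hm : (x : G) ∈ omega1 p H := Subgroup.subset_closure ⟨x.2, by
    have := pow_orderOf_eq_one x
    rw [hx] at this
    exact_mod_cast congrArg Subtype.val this⟩
  rw [hb, Subgroup.mem_bot] at hm
  have : x = 1 := Subtype.ext hm
  rw [this, orderOf_one] at hx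
  exact (Fact.out : p.Prime).one_lt.ne hx

theorem factor_aux {G : Type*} [Group G] [Finite G] (p : ℕ) [Fact p.Prime] (S : Sylow p G)
    (hcen : omega1 p (S : Subgroup G) ≤
      (S : Subgroup G) ⊓ Subgroup.centralizer ((S : Subgroup G) : Set G))
    (hfus : ControlsPFusion (S : Subgroup G) (Subgroup.normalizer ((S : Subgroup G) : Set G)))
    (A : Subgroup G) (hA : A ≤ omega1 p (S : Subgroup G)) (x : G)
    (hx : x ∈ pResidual p (Subgroup.normalizer (A : Set G))) :
    ∃ k ∈ pResidual p (Subgroup.centralizer (A : Set G)),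
      ∃ r ∈ Subgroup.normalizer ((S : Subgroup G) : Set G) ⊓
        pResidual p (Subgroup.normalizer (A : Set G)), x = k * r := by
  have hle : pResidual p (Subgroup.normalizer (A : Set G)) ≤ Subgroup.normalizer (A : Set G) := by
    unfold pResidual
    rw [Subgroup.closure_le]
    exact fun x hx => hx.1
  have hxn := inv_mem (hle hx)
  obtain ⟨h, hh, c, hc, hxc⟩ := hfus A (hA.trans omega1_le) x⁻¹ (fun q hq =>
    omega1_le (hA ((Subgroup.mem_normalizer_iff.1 hxn q).1 hq)))
  have hSC : (S : Subgroup G) ≤ Subgroup.centralizer (A : Set G) := by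
    intro s hs
    rw [Subgroup.mem_centralizer_iff]
    intro a ha
    exact (Subgroup.mem_centralizer_iff.1 (hcen (hA ha)).2 s hs).symm
  have hpow : ∀ s ∈ (S : Subgroup G), ∃ n : ℕ, s ^ p ^ n = 1 := fun s hs => by
    obtain ⟨n, hn⟩ := S.isPGroup' ⟨s, hs⟩
    exact ⟨n, congrArg Subtype.val hn⟩
  have hSK : (S : Subgroup G) ≤ pResidual p (Subgroup.centralizer (A : Set G)) := fun s hs =>
    Subgroup.subset_closure ⟨hSC hs, hpow s hs⟩
  have hSK' : ((c⁻¹ • S : Sylow p G) : Subgroup G) ≤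
      pResidual p (Subgroup.centralizer (A : Set G)) := by
    intro s hs
    rw [Sylow.coe_subgroup_smul, Subgroup.mem_pointwise_smul_iff_inv_smul_mem] at hs
    have := pRes_conj c⁻¹ (K := Subgroup.centralizer (A : Set G))
      (fun x hx => mul_mem (mul_mem (inv_mem hc) hx) (inv_mem (inv_mem hc))) (hSK hs)
    simpa [mul_assoc] using this
  obtain ⟨k, hk⟩ := MulAction.exists_smul_eq (pResidual p (Subgroup.centralizer (A : Set G)))
    ((c⁻¹ • S).subtype hSK') (S.subtype hSK)
  have hk2 : ((k : G) * c⁻¹) • S = S := by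
    simp_rw [Sylow.smul_subtype, Subgroup.smul_def, smul_smul] at hk
    exact Sylow.subtype_injective hk
  have hn : (k : G) * c⁻¹ ∈ Subgroup.normalizer ((S : Subgroup G) : Set G) :=
    Sylow.smul_eq_iff_mem_normalizer.1 hk2
  have hxe : x = c⁻¹ * h⁻¹ := by rw [← inv_inj, hxc]; simp
  refine ⟨(k : G)⁻¹, inv_mem k.2, (k : G) * c⁻¹ * h⁻¹, ⟨Subgroup.mul_mem _ hn (Subgroup.inv_mem _ hh), ?_⟩, ?_⟩
  · have : (k : G) * c⁻¹ * h⁻¹ = k * x := by rw [hxe, mul_assoc]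
    rw [this]
    exact mul_mem (pRes_mono (Subgroup.centralizer_le_normalizer _) k.2) hx
  · rw [hxe]; group

theorem stmt0 {G : Type*} [Group G] [Fintype G] (p : ℕ) [Fact p.Prime]
    (hdvd : p ∣ Fintype.card G) (S : Sylow p G)
    (hcen : omega1 p (S : Subgroup G) ≤
      (S : Subgroup G) ⊓ Subgroup.centralizer ((S : Subgroup G) : Set G))
    (hfus : ControlsPFusion (S : Subgroup G) (Subgroup.normalizer ((S : Subgroup G) : Set G))) :
    grodalSubgroup p (S : Subgroup G) =
      ⨆ Q ∈ {Q : Subgroup G | Q ≠ ⊥ ∧ Q ≤ omega1 p (S : Subgroup G)},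
        Subgroup.normalizer ((S : Subgroup G) : Set G) ⊓ pResidual p (Subgroup.normalizer (Q : Set G)) := by
  classical
  apply le_antisymm
  · unfold grodalSubgroup
    rw [Subgroup.closure_le]
    rintro g ⟨hg, n, hn, Q, gs, hQ, hgs, hgp, hQ01, hch⟩
    set T := ⨆ Q ∈ {Q : Subgroup G | Q ≠ ⊥ ∧ Q ≤ omega1 p (S : Subgroup G)},
        Subgroup.normalizer ((S : Subgroup G) : Set G) ⊓
          pResidual p (Subgroup.normalizer (Q : Set G)) with hT
    have hTle : ∀ A : Subgroup G, A ≠ ⊥ → A ≤ omega1 p (S : Subgroup G) →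
        Subgroup.normalizer ((S : Subgroup G) : Set G) ⊓
          pResidual p (Subgroup.normalizer (A : Set G)) ≤ T := fun A h1 h2 =>
      le_iSup₂_of_le A ⟨h1, h2⟩ le_rfl
    have hTN : T ≤ Subgroup.normalizer ((S : Subgroup G) : Set G) :=
      iSup₂_le fun A _ => inf_le_left
    have hΩ : ∀ i ≤ n, omega1 p (Q i) ≠ ⊥ ∧ omega1 p (Q i) ≤ omega1 p (S : Subgroup G) :=
      fun i hi => ⟨omega1_ne_bot S.isPGroup' (hQ i hi).2 (hQ i hi).1, omega1_mono (hQ i hi).2⟩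
    have hch' : ∀ i < n, ∀ x ∈ omega1 p (Q 0),
        (partialProd gs i)⁻¹ * x * partialProd gs i ∈ omega1 p (Q (i + 1)) := by
      intro i hi x hx
      have := omega1_conj (K := Q (i + 1)) (partialProd gs i)⁻¹ (fun y hy => by
        rw [inv_inv]
        rcases Nat.eq_zero_or_pos i with rfl | h0
        · simpa [partialProd] using hQ01 hy
        · exact hch i h0 (by omega) y hy) hx
      simpa using this
    have key : ∀ i ≤ n, ∃ u ∈ pResidual p (Subgroup.centralizer (omega1 p (Q 0) : Set G)),
        ∃ r ∈ T, partialProd gs i = u * r := by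
      intro i
      induction i with
      | zero => exact fun _ => ⟨1, one_mem _, 1, one_mem _, by simp [partialProd]⟩
      | succ i ih =>
        intro hi
        obtain ⟨u, hu, r, hr, hur⟩ := ih (by omega)
        obtain ⟨k, hk, r', hr', hkr⟩ := factor_aux p S hcen hfus (omega1 p (Q (i + 1)))
          (hΩ _ hi).2 (gs (i + 1))
          (pRes_mono normalizer_omega1 (hgs (i + 1) (by omega) hi))
        have hstep : partialProd gs (i + 1) = partialProd gs i * gs (i + 1) := by
          simp [partialProd, List.range_succ]
        refine ⟨u * (r * k * r⁻¹), mul_mem hu (pRes_conj r ?_ hk), r * r',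
          mul_mem hr (hTle _ (hΩ _ hi).1 (hΩ _ hi).2 hr'), ?_⟩
        · intro y hy
          rw [Subgroup.mem_centralizer_iff]
          intro a ha
          have huc : u ∈ Subgroup.centralizer (omega1 p (Q 0) : Set G) := by
            have : pResidual p (Subgroup.centralizer (omega1 p (Q 0) : Set G)) ≤
                Subgroup.centralizer (omega1 p (Q 0) : Set G) := by
              rw [pResidual, Subgroup.closure_le]
              exact fun x hx => hx.1
            exact this hu
          have h1 := hch' i (by omega) a ha
          have h2 : (partialProd gs i)⁻¹ * a * partialProd gs i = r⁻¹ * a * r := by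
            have := Subgroup.mem_centralizer_iff.1 huc a ha
            rw [hur]
            calc (u * r)⁻¹ * a * (u * r) = r⁻¹ * u⁻¹ * (a * u) * r := by group
              _ = r⁻¹ * a * r := by rw [this]; group
          rw [h2] at h1
          have h3 := Subgroup.mem_centralizer_iff.1 hy _ h1
          calc a * (r * y * r⁻¹) = r * ((r⁻¹ * a * r) * y) * r⁻¹ := by group
            _ = r * y * r⁻¹ * a := by rw [h3]; group
        · rw [hstep, hur, hkr]; group
    obtain ⟨u, hu, r, hr, hur⟩ := key n le_rfl
    have hgur : g = u * r := hgp.trans hur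
    have huN : u ∈ Subgroup.normalizer ((S : Subgroup G) : Set G) := by
      have : u = g * r⁻¹ := by rw [hgur]; group
      rw [this]
      exact mul_mem hg (inv_mem (hTN hr))
    rw [hgur]
    exact mul_mem (hTle _ (hΩ 0 (by omega)).1 (hΩ 0 (by omega)).2
      ⟨huN, pRes_mono (Subgroup.centralizer_le_normalizer _) hu⟩) hr
  · refine iSup₂_le fun A hA g hg => Subgroup.subset_closure ?_
    refine ⟨hg.1, 1, le_rfl, fun _ => A, fun _ => g, fun i _ => ⟨hA.1, hA.2.trans omega1_le⟩,
      fun i _ _ => hg.2, by simp [partialProd], le_rfl, ?_⟩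
    intro i h1 h2
    omega
end

section
/- Let p be a prime, let G be a finite group of order divisible by p, and let S be a Sylow p-subgroup of G. Assume that Ω1(S) ≤ Z(S) and that N_G(S) controls p-fusion in G. Let R = ⟨N_G(S) ∩ O^{p'}(N_G(Q)) : 1 < Q ≤ Ω1(S)⟩ and J = ⟨N_G(S) ∩ S·N_G(Q)' : 1 < Q ≤ Ω1(S)⟩, where N_G(Q)' denotes the derived subgroup of N_G(Q). Then N_G(S)'·R = J; in particular, the abelianization of N_G(S)/R is isomorphic to N_G(S)/J. -/
open Subgroup Pointwise

/-- `R = ⟨N_G(S) ∩ O^{p'}(N_G(Q)) : 1 < Q ≤ Ω₁(S)⟩`. -/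
def Rsub {G : Type*} [Group G] (p : ℕ) (S : Subgroup G) : Subgroup G :=
  ⨆ Q ∈ {Q : Subgroup G | Q ≠ ⊥ ∧ Q ≤ omega1 p S},
    Subgroup.normalizer (S : Set G) ⊓ pResidual p (Subgroup.normalizer (Q : Set G))

/-- `J = ⟨N_G(S) ∩ S·N_G(Q)' : 1 < Q ≤ Ω₁(S)⟩`, where `S·N_G(Q)'` is the product set
of `S` and the derived subgroup of `N_G(Q)`. -/
def Jsub {G : Type*} [Group G] (p : ℕ) (S : Subgroup G) : Subgroup G :=
  Subgroup.closure (⋃ Q ∈ {Q : Subgroup G | Q ≠ ⊥ ∧ Q ≤ omega1 p S},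
    (Subgroup.normalizer (S : Set G) : Set G) ∩
      ((S : Set G) * ((⁅Subgroup.normalizer (Q : Set G), Subgroup.normalizer (Q : Set G)⁆ : Subgroup G) : Set G)))

open scoped commutatorElement

theorem aux_le_normalizer {G : Type*} [Group G] (K H : Subgroup G)
    (h : ∀ k ∈ K, ∀ x ∈ H, k * x * k⁻¹ ∈ H) : K ≤ normalizer (H : Set G) := by
  intro k hk
  rw [Subgroup.mem_normalizer_iff]
  intro x
  refine ⟨h k hk x, fun hx => ?_⟩
  have := h k⁻¹ (K.inv_mem hk) _ hx
  simpa [mul_assoc] using this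

theorem aux_comm_norm {G : Type*} [Group G] (K : Subgroup G) :
    K ≤ normalizer ((⁅K, K⁆ : Subgroup G) : Set G) := by
  apply aux_le_normalizer
  intro k hk x hx
  have hle : ⁅K, K⁆ ≤ K := (Subgroup.commutator_le).2 fun a ha b hb => by
    rw [commutatorElement_def]
    exact K.mul_mem (K.mul_mem (K.mul_mem ha hb) (K.inv_mem ha)) (K.inv_mem hb)
  have h1 := Subgroup.commutator_mem_commutator hk (hle hx)
  have : k * x * k⁻¹ = ⁅k, x⁆ * x := by simp [commutatorElement_def]
  rw [this]
  exact mul_mem h1 hx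

theorem aux_pRes_le {G : Type*} [Group G] (p : ℕ) (M : Subgroup G) : pResidual p M ≤ M :=
  (Subgroup.closure_le _).2 fun _ hx => hx.1

theorem aux_pRes_norm {G : Type*} [Group G] (p : ℕ) (M : Subgroup G) :
    ∀ k ∈ M, ∀ x ∈ pResidual p M, k * x * k⁻¹ ∈ pResidual p M := by
  intro k hk x hx
  have : pResidual p M ≤ (pResidual p M).comap (MulAut.conj k).toMonoidHom := by
    conv_lhs => unfold pResidual
    rw [Subgroup.closure_le]
    rintro y ⟨hy, n, hn⟩
    refine Subgroup.subset_closure ⟨?_, n, ?_⟩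
    · exact M.mul_mem (M.mul_mem hk hy) (M.inv_mem hk)
    · rw [← map_pow, hn, map_one]
  exact this hx

theorem aux_pow {G : Type*} [Group G] {p : ℕ} {S : Subgroup G} (hS : IsPGroup p S) {x : G}
    (hx : x ∈ S) : ∃ n : ℕ, x ^ p ^ n = 1 := by
  obtain ⟨n, hn⟩ := hS ⟨x, hx⟩
  exact ⟨n, by simpa using congrArg Subtype.val hn⟩

theorem aux_S_le {G : Type*} [Group G] {p : ℕ} (S : Sylow p G) (M : Subgroup G)
    (h : (S : Subgroup G) ≤ M) : (S : Subgroup G) ≤ pResidual p M :=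
  fun _ hx => Subgroup.subset_closure ⟨h hx, aux_pow S.2 hx⟩

theorem aux_frattini {G : Type*} [Group G] [Finite G] {p : ℕ} [Fact p.Prime] (S : Sylow p G)
    (M : Subgroup G) (h : (S : Subgroup G) ≤ M) (m : G) (hm : m ∈ M) :
    ∃ n ∈ normalizer ((S : Subgroup G) : Set G) ⊓ M, ∃ l ∈ pResidual p M, m = n * l := by
  have hSL := aux_S_le S M h
  have h2 : ((m⁻¹ • S : Sylow p G) : Subgroup G) ≤ pResidual p M := by
    intro x hx
    rw [Sylow.coe_subgroup_smul, Subgroup.mem_smul_pointwise_iff_exists] at hx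
    obtain ⟨s, hs, rfl⟩ := hx
    exact aux_pRes_norm p M _ (M.inv_mem hm) s (hSL hs)
  obtain ⟨l, hl⟩ := MulAction.exists_smul_eq (pResidual p M) (Sylow.subtype _ h2) (S.subtype hSL)
  simp_rw [Sylow.smul_subtype, Subgroup.smul_def, smul_smul] at hl
  have hn := Sylow.smul_eq_iff_mem_normalizer.mp (Sylow.subtype_injective hl)
  have hlM : (l : G) ∈ M := aux_pRes_le p M l.2
  refine ⟨(l * m⁻¹)⁻¹, ⟨Subgroup.inv_mem _ hn, M.inv_mem (M.mul_mem hlM (M.inv_mem hm))⟩, l, l.2, ?_⟩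
  simp

theorem aux_comm {G : Type*} [Group G] (K L M : Subgroup G) (hKM : K ≤ M) (hLM : L ≤ M)
    (hn : ∀ k ∈ M, ∀ x ∈ L, k * x * k⁻¹ ∈ L)
    (hf : ∀ m ∈ M, ∃ n ∈ K, ∃ l ∈ L, m = n * l) : ⁅M, M⁆ ≤ ⁅K, K⁆ ⊔ L := by
  rw [Subgroup.commutator_le]
  intro a ha b hb
  obtain ⟨k, hk, l, hl, rfl⟩ := hf a ha
  obtain ⟨k', hk', l', hl', rfl⟩ := hf b hb
  have e1 : ∀ l ∈ L, ∀ b ∈ M, ⁅l, b⁆ ∈ L := fun l hl b hb => by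
    rw [show ⁅l, b⁆ = l * (b * l⁻¹ * b⁻¹) by simp [commutatorElement_def, mul_assoc]]
    exact mul_mem hl (hn b hb _ (inv_mem hl))
  rw [commutatorElement_mul_left_eq_conj_mul]
  refine mul_mem (mem_sup_right (hn k (hKM hk) _ (e1 l hl _ hb))) ?_
  rw [commutatorElement_mul_right_eq_mul_conj, mul_assoc, mul_assoc, ← mul_assoc k']
  refine mul_mem (mem_sup_left (commutator_mem_commutator hk hk'))
    (mem_sup_right (hn k' (hKM hk') _ ?_))
  rw [← commutatorElement_inv]
  exact inv_mem (e1 l' hl' k (hKM hk))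

theorem aux_pRes_le_sup {G : Type*} [Group G] [Finite G] {p : ℕ} [Fact p.Prime] (S : Sylow p G)
    (M : Subgroup G) (h : (S : Subgroup G) ≤ M) :
    pResidual p M ≤ (S : Subgroup G) ⊔ ⁅M, M⁆ := by
  unfold pResidual
  rw [Subgroup.closure_le]
  rintro x ⟨hx, n, hn⟩
  have hP : IsPGroup p (Subgroup.zpowers (⟨x, hx⟩ : M)) := by
    rintro ⟨y, hy⟩
    obtain ⟨k, rfl⟩ := Subgroup.mem_zpowers_iff.1 hy
    refine ⟨n, ?_⟩
    ext
    simp only [SubmonoidClass.mk_pow, OneMemClass.coe_one, SubgroupClass.coe_zpow, SubmonoidClass.coe_pow]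
    rw [← zpow_natCast, zpow_comm, zpow_natCast, hn, one_zpow]
  obtain ⟨T, hT⟩ := hP.exists_le_sylow
  obtain ⟨m, hm⟩ := MulAction.exists_smul_eq M (S.subtype h) T
  have hxT : (⟨x, hx⟩ : M) ∈ (T : Subgroup M) := hT (Subgroup.mem_zpowers _)
  rw [← hm, Sylow.coe_subgroup_smul, Subgroup.mem_smul_pointwise_iff_exists] at hxT
  obtain ⟨s, hs, hsx⟩ := hxT
  have hs' : (s : G) ∈ (S : Subgroup G) := hs
  have hx2 : x = ⁅(m : G), (s : G)⁆ * s := by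
    have : ((MulAut.conj m • s : M) : G) = x := congrArg Subtype.val hsx
    rw [← this]
    simp [commutatorElement_def, MulAut.smul_def]
  rw [hx2]
  exact mul_mem (mem_sup_right (commutator_mem_commutator m.2 s.2)) (mem_sup_left hs')

theorem aux_omega_norm {G : Type*} [Group G] (p : ℕ) (S : Subgroup G) :
    normalizer (S : Set G) ≤ normalizer (omega1 p S : Set G) := by
  apply aux_le_normalizer
  intro k hk x hx
  have : omega1 p S ≤ (omega1 p S).comap (MulAut.conj k).toMonoidHom := by
    conv_lhs => unfold omega1
    rw [Subgroup.closure_le]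
    rintro y ⟨hy, hn⟩
    refine Subgroup.subset_closure ⟨?_, ?_⟩
    · exact (Subgroup.mem_normalizer_iff.1 hk y).1 hy
    · rw [← map_pow, hn, map_one]
  exact this hx

theorem stmt1 {G : Type*} [Group G] [Fintype G] (p : ℕ) [Fact p.Prime]
    (hdvd : p ∣ Fintype.card G) (S : Sylow p G)
    (hcen : omega1 p (S : Subgroup G) ≤
      (S : Subgroup G) ⊓ Subgroup.centralizer ((S : Subgroup G) : Set G))
    (hfus : ControlsPFusion (S : Subgroup G) (Subgroup.normalizer ((S : Subgroup G) : Set G))) :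
    ((⁅Subgroup.normalizer ((S : Subgroup G) : Set G),
        Subgroup.normalizer ((S : Subgroup G) : Set G)⁆ : Subgroup G) : Set G) *
        (Rsub p (S : Subgroup G) : Set G) = (Jsub p (S : Subgroup G) : Set G) := by
  have hSM : ∀ Q : Subgroup G, Q ≤ omega1 p (S : Subgroup G) →
      (S : Subgroup G) ≤ normalizer (Q : Set G) := by
    intro Q hQ s hs
    apply Subgroup.centralizer_le_normalizer
    rw [Subgroup.mem_centralizer_iff]
    intro q hq
    exact ((Subgroup.mem_centralizer_iff.1 (hcen (hQ hq)).2) s hs).symm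
  have hRN : Rsub p (S : Subgroup G) ≤ normalizer ((S : Subgroup G) : Set G) :=
    iSup₂_le fun Q _ => inf_le_left
  have hne : omega1 p (S : Subgroup G) ≠ ⊥ := by
    intro hbot
    have hd : p ∣ Nat.card S := S.dvd_card_of_dvd_card (by rwa [Nat.card_eq_fintype_card])
    obtain ⟨x, hx⟩ := exists_prime_orderOf_dvd_card' p hd
    have hx1 : (x : G) ∈ omega1 p (S : Subgroup G) :=
      Subgroup.subset_closure ⟨x.2, by
        have := pow_orderOf_eq_one x
        rw [hx] at this
        simpa using congrArg Subtype.val this⟩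
    rw [hbot, Subgroup.mem_bot] at hx1
    have hx2 : x = 1 := Subtype.ext hx1
    rw [hx2, orderOf_one] at hx
    exact (Fact.out : p.Prime).one_lt.ne hx
  rw [← Subgroup.coe_mul_of_right_le_normalizer_left _ _
    (hRN.trans (aux_comm_norm _))]
  refine congrArg _ (le_antisymm (sup_le ?_ ?_) ?_)
  · intro x hx
    refine Subgroup.subset_closure (Set.mem_biUnion
      (show omega1 p (S : Subgroup G) ∈ _ from ⟨hne, le_rfl⟩) ⟨?_, ?_⟩)
    · have hle : ⁅normalizer ((S : Subgroup G) : Set G), normalizer ((S : Subgroup G) : Set G)⁆ ≤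
          normalizer ((S : Subgroup G) : Set G) := Subgroup.commutator_le.2 fun a ha b hb => by
        rw [commutatorElement_def]
        exact mul_mem (mul_mem (mul_mem ha hb) (inv_mem ha)) (inv_mem hb)
      exact hle hx
    · exact Set.mem_mul.2 ⟨1, one_mem _, x,
        Subgroup.commutator_mono (aux_omega_norm p _) (aux_omega_norm p _) hx, one_mul x⟩
  · refine iSup₂_le fun Q hQ => ?_
    rintro x ⟨hxN, hxL⟩
    refine Subgroup.subset_closure (Set.mem_biUnion hQ ⟨hxN, ?_⟩)
    have := aux_pRes_le_sup S _ (hSM Q hQ.2) hxL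
    rw [← SetLike.mem_coe, Subgroup.coe_mul_of_left_le_normalizer_right _ _
      ((hSM Q hQ.2).trans (aux_comm_norm _))] at this
    exact this
  · unfold Jsub
    rw [Subgroup.closure_le]
    refine Set.iUnion₂_subset fun Q hQ => ?_
    rintro x ⟨hxN, s, hs, t, ht, rfl⟩
    have hM := hSM Q hQ.2
    set M := normalizer (Q : Set G) with hMdef
    set N := normalizer ((S : Subgroup G) : Set G) with hNdef
    have hc := aux_comm (N ⊓ M) (pResidual p M) M inf_le_right (aux_pRes_le p M)
      (aux_pRes_norm p M) (aux_frattini S M hM) ht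
    have hst : s * t ∈ ⁅N ⊓ M, N ⊓ M⁆ ⊔ pResidual p M :=
      mul_mem (mem_sup_right (aux_S_le S M hM hs)) hc
    have hcM : ⁅N ⊓ M, N ⊓ M⁆ ≤ N ⊓ M := Subgroup.commutator_le.2 fun a ha b hb => by
      rw [commutatorElement_def]
      exact mul_mem (mul_mem (mul_mem ha hb) (inv_mem ha)) (inv_mem hb)
    rw [← SetLike.mem_coe, Subgroup.coe_mul_of_left_le_normalizer_right _ _
      ((hcM.trans inf_le_right).trans (aux_le_normalizer _ _ (aux_pRes_norm p M)))] at hst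
    obtain ⟨n, hn, l, hl, hnl⟩ := hst
    simp only at hnl hxN ⊢
    rw [← hnl] at hxN ⊢
    refine mul_mem (mem_sup_left (Subgroup.commutator_mono inf_le_left inf_le_left hn))
      (mem_sup_right ?_)
    have hlN : l ∈ N := (Subgroup.mul_mem_cancel_left _ (hcM hn).1).1 hxN
    exact (le_iSup₂_of_le (f := fun (Q : Subgroup G)
      (_ : Q ∈ {Q : Subgroup G | Q ≠ ⊥ ∧ Q ≤ omega1 p (S : Subgroup G)}) =>
      normalizer ((S : Subgroup G) : Set G) ⊓ pResidual p (normalizer (Q : Set G)))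
      Q hQ le_rfl) ⟨hlN, hl⟩
end

section
/- Let p be a prime, let G be a finite group with Sylow p-subgroup S, and suppose N_G(S) controls p-fusion in G. Let Q be a nontrivial subgroup of S with Q ≤ Z(S). Then N_G(Q) = (N_G(S) ∩ N_G(Q))·C_G(Q), and O^{p'}(N_G(Q)) is the subgroup generated by the conjugates gSg⁻¹ with g ranging over C_G(Q). -/
open Subgroup Pointwise

theorem stmt2 {G : Type*} [Group G] [Fintype G] (p : ℕ) [Fact p.Prime]
    (S : Sylow p G)
    (hfus : ControlsPFusion (S : Subgroup G) (Subgroup.normalizer ((S : Subgroup G) : Set G)))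
    (Q : Subgroup G) (hQ : Q ≠ ⊥) (hQS : Q ≤ (S : Subgroup G))
    (hQZ : Q ≤ Subgroup.centralizer ((S : Subgroup G) : Set G)) :
    ((Subgroup.normalizer ((S : Subgroup G) : Set G) ⊓ Subgroup.normalizer (Q : Set G) : Subgroup G) : Set G) *
        (Subgroup.centralizer (Q : Set G) : Set G) = (Subgroup.normalizer (Q : Set G) : Set G) ∧
      pResidual p (Subgroup.normalizer (Q : Set G)) =
        ⨆ g ∈ Subgroup.centralizer (Q : Set G),
          Subgroup.map (MulAut.conj g).toMonoidHom (S : Subgroup G) := by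
  have hCN : Subgroup.centralizer (Q : Set G) ≤ Subgroup.normalizer (Q : Set G) := by
    intro c hc
    rw [Subgroup.mem_normalizer_iff]
    have key : ∀ c ∈ Subgroup.centralizer (Q : Set G), ∀ x ∈ Q, c * x * c⁻¹ = x := by
      intro c hc x hx
      rw [← Subgroup.mem_centralizer_iff.1 hc x hx]
      group
    intro x
    constructor
    · intro hx
      rw [key c hc x hx]
      exact hx
    · intro hx
      have h := key c⁻¹ (inv_mem hc) _ hx
      have h2 : x = c * x * c⁻¹ := by
        rw [← h]
        group
      rw [h2]
      exact hx
  have hSC : (S : Subgroup G) ≤ Subgroup.centralizer (Q : Set G) := by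
    intro s hs
    rw [Subgroup.mem_centralizer_iff]
    intro q hq
    exact (Subgroup.mem_centralizer_iff.1 (hQZ hq) s hs).symm
  have hSN := hSC.trans hCN
  have fac : ∀ g ∈ Subgroup.normalizer (Q : Set G),
      ∃ h ∈ Subgroup.normalizer ((S : Subgroup G) : Set G),
      ∃ c ∈ Subgroup.centralizer (Q : Set G), g = h * c := fun g hg =>
    hfus Q hQS g (fun q hq => hQS ((Subgroup.mem_normalizer_iff.1 hg q).1 hq))
  refine ⟨?_, le_antisymm ?_ ?_⟩
  · ext g
    constructor
    · rintro ⟨h, hh, c, hc, rfl⟩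
      exact mul_mem hh.2 (hCN hc)
    · intro hg
      obtain ⟨h, hh, c, hc, rfl⟩ := fac g hg
      refine ⟨h, ⟨hh, ?_⟩, c, hc, rfl⟩
      have := mul_mem (show h * c ∈ Subgroup.normalizer (Q : Set G) from hg) (inv_mem (hCN hc))
      simpa using this
  · refine (Subgroup.closure_le _).2 ?_
    rintro x ⟨hx, n, hn⟩
    let y : Subgroup.normalizer (Q : Set G) := ⟨x, hx⟩
    have hy : y ^ p ^ n = 1 := Subtype.ext hn
    have hP : IsPGroup p (Subgroup.zpowers y) := by
      obtain ⟨k, -, hk⟩ := (Nat.dvd_prime_pow Fact.out).1 (orderOf_dvd_of_pow_eq_one hy)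
      exact IsPGroup.of_card (n := k) (by rw [Nat.card_zpowers, hk])
    obtain ⟨P, hPle⟩ := hP.exists_le_sylow
    obtain ⟨m, hm⟩ := MulAction.exists_smul_eq (Subgroup.normalizer (Q : Set G)) (S.subtype hSN) P
    have hyP : y ∈ P := hPle (Subgroup.mem_zpowers y)
    rw [← hm] at hyP
    have hs : (m : G)⁻¹ * x * m ∈ (S : Subgroup G) := by
      have h1 : y ∈ MulAut.conj m • ((S.subtype hSN : Sylow p _) : Subgroup _) := hyP
      rw [Subgroup.mem_pointwise_smul_iff_inv_smul_mem] at h1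
      have h2 := Subgroup.mem_subgroupOf.1 h1
      simpa [y, ← map_inv, MulAut.smul_def, MulAut.conj_apply] using h2
    obtain ⟨h, hh, c, hc, hmc⟩ := fac (m : G)⁻¹ (inv_mem m.2)
    have hm' : (m : G) = c⁻¹ * h⁻¹ := by rw [← inv_inv (m : G), hmc]; group
    rw [hmc, hm'] at hs
    have hs2 : c * x * c⁻¹ ∈ (S : Subgroup G) := by
      rw [Subgroup.mem_normalizer_iff.1 hh]
      simpa [mul_assoc] using hs
    refine Subgroup.mem_iSup_of_mem c⁻¹ (Subgroup.mem_iSup_of_mem (inv_mem hc) ?_)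
    refine ⟨c * x * c⁻¹, hs2, ?_⟩
    simp [MulAut.conj_apply, mul_assoc]
  · refine iSup₂_le fun g hg => ?_
    rintro _ ⟨s, hs, rfl⟩
    refine Subgroup.subset_closure ⟨?_, ?_⟩
    · exact mul_mem (mul_mem (hCN hg) (hSN hs)) (inv_mem (hCN hg))
    · obtain ⟨n, hn⟩ := S.isPGroup' ⟨s, hs⟩
      have hn' : s ^ p ^ n = 1 := congrArg Subtype.val hn
      refine ⟨n, ?_⟩
      rw [← map_pow, hn', map_one]
end

section
/- Let p be a prime, let G be a finite group with Sylow p-subgroup S, and suppose N_G(S) controls p-fusion in G. If Q_0 and Q_1 are subgroups of S with 1 < Q_0 ≤ Q_1 ≤ Z(S), then O^{p'}(N_G(Q_1)) ≤ O^{p'}(N_G(Q_0)). -/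
open Subgroup

theorem stmt3 {G : Type*} [Group G] [Fintype G] (p : ℕ) [Fact p.Prime]
    (S : Sylow p G)
    (hfus : ControlsPFusion (S : Subgroup G) (Subgroup.normalizer ((S : Subgroup G) : Set G)))
    (Q₀ Q₁ : Subgroup G) (hQ₀ : Q₀ ≠ ⊥) (hle : Q₀ ≤ Q₁)
    (hQ₁ : Q₁ ≤ (S : Subgroup G) ⊓ Subgroup.centralizer ((S : Subgroup G) : Set G)) :
    pResidual p (Subgroup.normalizer (Q₁ : Set G)) ≤ pResidual p (Subgroup.normalizer (Q₀ : Set G)) := by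
  have hSC : (S : Subgroup G) ≤ centralizer (Q₁ : Set G) := by
    rw [Subgroup.le_centralizer_iff]
    exact hQ₁.trans inf_le_right
  have hSN : (S : Subgroup G) ≤ normalizer (Q₁ : Set G) :=
    hSC.trans (Subgroup.centralizer_le_normalizer _)
  unfold pResidual
  apply Subgroup.closure_mono
  rintro g ⟨hg, n, hn⟩
  refine ⟨?_, n, hn⟩
  have hCC : centralizer (Q₁ : Set G) ≤ normalizer (Q₀ : Set G) :=
    (Subgroup.centralizer_le (by exact_mod_cast hle)).trans (Subgroup.centralizer_le_normalizer _)
  apply hCC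
  let N := normalizer (Q₁ : Set G)
  let g' : N := ⟨g, hg⟩
  have hp : IsPGroup p (Subgroup.zpowers g') := by
    apply IsPGroup.of_card (n := Nat.find (⟨_, (Nat.dvd_prime_pow Fact.out).1 (orderOf_dvd_of_pow_eq_one (x := g') (n := p ^ n) (Subtype.ext hn))|>.choose_spec.2⟩ : ∃ k, orderOf g' = p ^ k))
    rw [Nat.card_zpowers]
    exact Nat.find_spec (p := fun k => orderOf g' = p ^ k) _
  obtain ⟨P, hP⟩ := hp.exists_le_sylow
  obtain ⟨x, hx⟩ := MulAction.exists_smul_eq N (S.subtype hSN) P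
  have hgP : g' ∈ P := hP (Subgroup.mem_zpowers g')
  rw [← hx, ← SetLike.mem_coe, Sylow.coe_smul] at hgP
  obtain ⟨s, hs, hsg⟩ := hgP
  have hs' : (s : G) ∈ (S : Subgroup G) := hs
  have hgs : (x : G) * s * (x : G)⁻¹ = g := congrArg Subtype.val hsg
  rw [← hgs]
  have hsc := Subgroup.mem_centralizer_iff.1 (hSC hs')
  rw [Subgroup.mem_centralizer_iff]
  intro q hq
  have hq' : (x : G)⁻¹ * q * x ∈ (Q₁ : Set G) := by
    have h2 := (Subgroup.mem_normalizer_iff.1 (N.inv_mem x.2) q).1 hq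
    simpa using h2
  have h := hsc _ hq'
  calc q * (x * s * (x : G)⁻¹) = x * ((x : G)⁻¹ * q * x * s) * (x : G)⁻¹ := by group
    _ = x * (s * ((x : G)⁻¹ * q * x)) * (x : G)⁻¹ := by rw [h]
    _ = _ := by group
end

section
/- Let p be a prime, let G be a finite group, and let S be a Sylow p-subgroup of G. Then for every nontrivial subgroup Q of S one has ρ^1(Q) ≤ ρ^1(Ω1(Q)), and for every i ≥ 1 and every nontrivial subgroup Q of S, ρ^{i+1}(Q) = ⟨N_G(Q) ∩ ρ^i(P) : 1 < P ≤ Ω1(S)⟩; that is, in the inductive definition of ρ^{i+1}(Q) it suffices to let P range over the nontrivial subgroups of Ω1(S). -/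
open Subgroup

/-- `T` is a Sylow `p`-subgroup of the subgroup `H` of `G`: a `p`-subgroup of `H`
that is maximal among the `p`-subgroups of `H`. -/
def IsSylowPSubgroupOf {G : Type*} [Group G] (p : ℕ) (T H : Subgroup G) : Prop :=
  T ≤ H ∧ IsPGroup p T ∧ ∀ U : Subgroup G, U ≤ H → IsPGroup p U → T ≤ U → U = T

/-- The Carlson–Thévenaz subgroups `ρ^i(P)`, relative to a choice `SP P` of a Sylow
`p`-subgroup of `N_G(P)` for each `P`: `ρ^1(P) = S_P·N_G(P)'` and
`ρ^{i+1}(P) = ⟨N_G(P) ∩ ρ^i(Q) : 1 < Q ≤ S⟩`. -/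
def rho {G : Type*} [Group G] (SP : Subgroup G → Subgroup G) (S : Subgroup G) :
    ℕ → Subgroup G → Subgroup G
  | 0, _ => ⊥
  | 1, P => SP P ⊔ ⁅Subgroup.normalizer (P : Set G), Subgroup.normalizer (P : Set G)⁆
  | (i + 2), P =>
      ⨆ Q ∈ {Q : Subgroup G | Q ≠ ⊥ ∧ Q ≤ S}, Subgroup.normalizer (P : Set G) ⊓ rho SP S (i + 1) Q

lemma aux_omega_le {G : Type*} [Group G] (p : ℕ) (S : Subgroup G) : omega1 p S ≤ S := by
  unfold omega1
  rw [Subgroup.closure_le]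
  exact fun g hg => hg.1

lemma aux_omega_mono {G : Type*} [Group G] (p : ℕ) {P S : Subgroup G} (h : P ≤ S) :
    omega1 p P ≤ omega1 p S :=
  Subgroup.closure_mono fun _ hg => ⟨h hg.1, hg.2⟩

lemma aux_conj_mem {G : Type*} [Group G] (p : ℕ) (Q : Subgroup G) {g : G}
    (hg : g ∈ Subgroup.normalizer (Q : Set G)) {x : G} (hx : x ∈ omega1 p Q) :
    g * x * g⁻¹ ∈ omega1 p Q := by
  unfold omega1 at hx ⊢
  induction hx using Subgroup.closure_induction with
  | mem x hx =>
    apply Subgroup.subset_closure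
    refine ⟨(Subgroup.mem_normalizer_iff.1 hg x).1 hx.1, ?_⟩
    rw [conj_pow, hx.2]; simp
  | one => simp
  | mul x y _ _ hx hy =>
    have := mul_mem hx hy
    convert this using 1
    group
  | inv x _ hx =>
    have := inv_mem hx
    convert this using 1
    group

lemma aux_normalizer_le {G : Type*} [Group G] (p : ℕ) (Q : Subgroup G) :
    Subgroup.normalizer (Q : Set G) ≤ Subgroup.normalizer (omega1 p Q : Set G) := by
  intro g hg
  rw [Subgroup.mem_normalizer_iff]
  intro x
  refine ⟨fun hx => aux_conj_mem p Q hg hx, fun hx => ?_⟩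
  have := aux_conj_mem p Q (inv_mem hg) hx
  convert this using 1
  group

lemma aux_omega_ne_bot {G : Type*} [Group G] [Finite G] (p : ℕ) [Fact p.Prime] (Q : Subgroup G)
    (hQ : IsPGroup p Q) (h : Q ≠ ⊥) : omega1 p Q ≠ ⊥ := by
  have : Nontrivial Q := (Subgroup.nontrivial_iff_ne_bot Q).2 h
  obtain ⟨n, hn, hc⟩ := hQ.nontrivial_iff_card.1 this
  have hd : p ∣ Nat.card Q := by
    rw [hc]; exact dvd_pow_self p hn.ne'
  obtain ⟨x, hx⟩ := exists_prime_orderOf_dvd_card' p hd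
  intro hb
  have hm : (x : G) ∈ omega1 p Q := by
    apply Subgroup.subset_closure
    refine ⟨x.2, ?_⟩
    have := pow_orderOf_eq_one x
    rw [hx] at this
    exact_mod_cast this
  rw [hb, Subgroup.mem_bot] at hm
  have : x = 1 := by exact_mod_cast hm
  rw [this, orderOf_one] at hx
  exact (Fact.out : p.Prime).one_lt.ne hx

lemma aux_le_sup {G : Type*} [Group G] [Finite G] (p : ℕ) [Fact p.Prime] (T H U : Subgroup G)
    (hT : IsSylowPSubgroupOf p T H) (hUH : U ≤ H) (hU : IsPGroup p U) : U ≤ T ⊔ ⁅H, H⁆ := by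
  obtain ⟨hTH, hTp, hmax⟩ := hT
  let T' : Sylow p H :=
    { toSubgroup := T.subgroupOf H
      isPGroup' := hTp.comap_subtype
      is_maximal' := by
        intro V hV hle
        have h1 : V.map H.subtype = T := by
          apply hmax
          · exact Subgroup.map_subtype_le V
          · exact hV.map _
          · intro t ht
            exact ⟨⟨t, hTH ht⟩, hle (Subgroup.mem_subgroupOf.2 ht), rfl⟩
        rw [← h1, Subgroup.subgroupOf, Subgroup.comap_map_eq_self_of_injective]
        exact H.subtype_injective }
  have hU' : IsPGroup p (U.subgroupOf H) := hU.comap_subtype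
  obtain ⟨R, hR⟩ := hU'.exists_le_sylow
  obtain ⟨h, hh⟩ := MulAction.exists_smul_eq H R T'
  intro u hu
  have huR : (⟨u, hUH hu⟩ : H) ∈ R := hR (Subgroup.mem_subgroupOf.2 hu)
  have h2 : h * ⟨u, hUH hu⟩ * h⁻¹ ∈ T' := by
    rw [← hh]
    exact ⟨_, huR, rfl⟩
  have h3 : (h : G) * u * (h : G)⁻¹ ∈ T := Subgroup.mem_subgroupOf.1 h2
  have h4 : u * (h : G) * u⁻¹ * (h : G)⁻¹ ∈ ⁅H, H⁆ := Subgroup.commutator_mem_commutator (hUH hu) h.2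
  have h5 := mul_mem (Subgroup.mem_sup_right (S := T) h4)
    (Subgroup.mem_sup_left (T := ⁅H, H⁆) h3)
  convert h5 using 1
  group

lemma aux_rho_one {G : Type*} [Group G] [Finite G] (p : ℕ) [Fact p.Prime]
    (S : Subgroup G) (SP : Subgroup G → Subgroup G)
    (hSP : ∀ P : Subgroup G, IsSylowPSubgroupOf p (SP P) (Subgroup.normalizer (P : Set G)))
    (Q : Subgroup G) : rho SP S 1 Q ≤ rho SP S 1 (omega1 p Q) := by
  have hN := aux_normalizer_le p Q
  unfold rho
  refine sup_le ?_ ((Subgroup.commutator_mono hN hN).trans le_sup_right)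
  exact aux_le_sup p _ _ _ (hSP _) ((hSP Q).1.trans hN) (hSP Q).2.1

lemma aux_rho {G : Type*} [Group G] [Finite G] (p : ℕ) [Fact p.Prime]
    (S : Subgroup G) (SP : Subgroup G → Subgroup G)
    (hSP : ∀ P : Subgroup G, IsSylowPSubgroupOf p (SP P) (Subgroup.normalizer (P : Set G)))
    (Q : Subgroup G) : ∀ i, rho SP S i Q ≤ rho SP S i (omega1 p Q)
  | 0 => le_of_eq (by simp [rho])
  | 1 => aux_rho_one p S SP hSP Q
  | (i + 2) => by
    unfold rho
    exact iSup₂_mono fun P _ => inf_le_inf_right _ (aux_normalizer_le p Q)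

theorem stmt5 {G : Type*} [Group G] [Fintype G] (p : ℕ) [Fact p.Prime]
    (S : Sylow p G) (SP : Subgroup G → Subgroup G)
    (hSP : ∀ P : Subgroup G, IsSylowPSubgroupOf p (SP P) (Subgroup.normalizer (P : Set G))) :
    (∀ Q : Subgroup G, Q ≠ ⊥ → Q ≤ (S : Subgroup G) →
      rho SP (S : Subgroup G) 1 Q ≤ rho SP (S : Subgroup G) 1 (omega1 p Q)) ∧
    (∀ i : ℕ, 1 ≤ i → ∀ Q : Subgroup G, Q ≠ ⊥ → Q ≤ (S : Subgroup G) →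
      rho SP (S : Subgroup G) (i + 1) Q =
        ⨆ P ∈ {P : Subgroup G | P ≠ ⊥ ∧ P ≤ omega1 p (S : Subgroup G)},
          Subgroup.normalizer (Q : Set G) ⊓ rho SP (S : Subgroup G) i P) := by
  refine ⟨fun Q _ _ => aux_rho_one p S SP hSP Q, ?_⟩
  intro i hi Q _ _
  obtain ⟨j, rfl⟩ : ∃ j, i = j + 1 := ⟨i - 1, by omega⟩
  rw [rho]
  apply le_antisymm
  · refine iSup₂_le fun P hP => ?_
    refine le_trans (inf_le_inf_left _ (aux_rho p S SP hSP P (j + 1))) ?_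
    exact le_iSup₂_of_le (omega1 p P)
      ⟨aux_omega_ne_bot p P (S.isPGroup'.to_le hP.2) hP.1, aux_omega_mono p hP.2⟩ le_rfl
  · refine iSup₂_le fun P hP => ?_
    exact le_iSup₂_of_le P ⟨hP.1, hP.2.trans (aux_omega_le p _)⟩ le_rfl
end

section
/- Let p be a prime, let G be a finite group of order divisible by p, let k be a field of characteristic p, and let S be a Sylow p-subgroup of G. Suppose that Ω1(S) ≤ Z(S) and that N_G(S) controls p-fusion in G. Then the group of weak S-homomorphisms of G (under pointwise multiplication) is isomorphic to the group of all homomorphisms φ : N_G(S) → k^× whose kernel contains ρ^2(S). -/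
open Subgroup

/-- The conjugate subgroup `gSg⁻¹`. -/
def conjSub {G : Type*} [Group G] (g : G) (S : Subgroup G) : Subgroup G :=
  Subgroup.map (MulAut.conj g).toMonoidHom S

/-- `χ : G → kˣ` is a weak `S`-homomorphism of `G`. -/
def IsWeakSHom {G : Type*} [Group G] {k : Type*} [Field k]
    (S : Subgroup G) (χ : G → kˣ) : Prop :=
  (∀ g ∈ S, χ g = 1) ∧ (∀ g : G, S ⊓ conjSub g S = ⊥ → χ g = 1) ∧
    ∀ g h : G, S ⊓ conjSub g S ⊓ conjSub (g * h) S ≠ ⊥ → χ (g * h) = χ g * χ h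

/-- The group of weak `S`-homomorphisms of `G`, under pointwise multiplication. -/
def weakSHomGroup {G : Type*} [Group G] (k : Type*) [Field k] (S : Subgroup G) :
    Subgroup (G → kˣ) where
  carrier := {χ | IsWeakSHom S χ}
  one_mem' :=
    ⟨fun _ _ => rfl, fun _ _ => rfl, fun _ _ _ => (mul_one (1 : kˣ)).symm⟩
  mul_mem' := by
    rintro a b ⟨ha1, ha2, ha3⟩ ⟨hb1, hb2, hb3⟩
    refine ⟨fun g hg => ?_, fun g hg => ?_, fun g h hgh => ?_⟩
    · simp [Pi.mul_apply, ha1 g hg, hb1 g hg]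
    · simp [Pi.mul_apply, ha2 g hg, hb2 g hg]
    · simp only [Pi.mul_apply, ha3 g h hgh, hb3 g h hgh]
      exact mul_mul_mul_comm _ _ _ _
  inv_mem' := by
    rintro a ⟨h1, h2, h3⟩
    refine ⟨fun g hg => ?_, fun g hg => ?_, fun g h hgh => ?_⟩
    · simp [Pi.inv_apply, h1 g hg]
    · simp [Pi.inv_apply, h2 g hg]
    · simp [Pi.inv_apply, h3 g h hgh, mul_comm]

/-- The group of homomorphisms `N_G(S) → kˣ` whose kernel contains `ρ²(S)`. -/
def homsKillingRhoTwo {G : Type*} [Group G] (k : Type*) [Field k]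
    (SP : Subgroup G → Subgroup G) (S : Subgroup G) : Subgroup (Subgroup.normalizer (S : Set G) →* kˣ) where
  carrier := {φ | ∀ x : Subgroup.normalizer (S : Set G), (x : G) ∈ rho SP S 2 S → φ x = 1}
  one_mem' := fun _ _ => rfl
  mul_mem' := by
    intro a b ha hb x hx
    simp [MonoidHom.mul_apply, ha x hx, hb x hx]
  inv_mem' := by
    intro a ha x hx
    simp [MonoidHom.inv_apply, ha x hx]


def LL {G : Type*} [Group G] (S : Subgroup G) (E : Set G) : Subgroup G :=
  Subgroup.closure {x : G | ∃ c ∈ Subgroup.centralizer E, ∃ s ∈ S, x = c * s * c⁻¹}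

def EE {G : Type*} [Group G] (p : ℕ) (S : Subgroup G) (g : G) : Set G :=
  {z : G | z ∈ S ∧ z ^ p = 1 ∧ g * z * g⁻¹ ∈ S}

theorem mem_conjSub_iff {G : Type*} [Group G] (g x : G) (S : Subgroup G) :
    x ∈ conjSub g S ↔ g⁻¹ * x * g ∈ S := by
  unfold conjSub
  constructor
  · rintro ⟨s, hs, rfl⟩
    simpa [mul_assoc] using hs
  · intro h
    exact ⟨_, h, by simp [mul_assoc]⟩

theorem mem_norm {G : Type*} [Group G] {S : Subgroup G} {m : G}
    (hm : m ∈ Subgroup.normalizer (S : Set G)) (x : G) : m * x * m⁻¹ ∈ S ↔ x ∈ S :=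
  (Subgroup.mem_normalizer_iff.1 hm x).symm

theorem mem_norm' {G : Type*} [Group G] {S : Subgroup G} {m : G}
    (hm : m ∈ Subgroup.normalizer (S : Set G)) (x : G) : m⁻¹ * x * m ∈ S ↔ x ∈ S := by
  have := mem_norm (inv_mem hm) x
  simpa using this

theorem LL_anti {G : Type*} [Group G] (S : Subgroup G) {E F : Set G} (h : F ⊆ E) :
    LL S E ≤ LL S F := by
  apply Subgroup.closure_mono
  rintro x ⟨c, hc, s, hs, rfl⟩
  exact ⟨c, Subgroup.centralizer_le h hc, s, hs, rfl⟩

theorem LL_conj {G : Type*} [Group G] (S : Subgroup G) {z m l : G}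
    (hm : m ∈ Subgroup.normalizer (S : Set G)) (hl : l ∈ LL S {m * z * m⁻¹}) :
    m⁻¹ * l * m ∈ LL S {z} := by
  have : LL S {m * z * m⁻¹} ≤ (LL S {z}).comap (MulAut.conj m⁻¹).toMonoidHom := by
    unfold LL
    rw [Subgroup.closure_le]
    rintro x ⟨c, hc, s, hs, rfl⟩
    apply Subgroup.subset_closure
    refine ⟨m⁻¹ * c * m, ?_, m⁻¹ * s * m, (mem_norm' hm s).2 hs, ?_⟩
    · rw [Subgroup.mem_centralizer_singleton_iff] at hc ⊢
      have : c * (m * z * m⁻¹) * m = (m * z * m⁻¹) * c * m := by rw [hc]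
      calc m⁻¹ * c * m * z = m⁻¹ * (c * (m * z * m⁻¹) * m) := by group
        _ = _ := by rw [this]; group
    · simp; group
  have := this hl
  simpa using this

theorem exists_p_elt {G : Type*} [Group G] [Finite G] (p : ℕ) [Fact p.Prime]
    (Q : Subgroup G) (hQ : IsPGroup p Q) (h : Q ≠ ⊥) : ∃ z ∈ Q, z ≠ 1 ∧ z ^ p = 1 := by
  have : Nontrivial Q := (Subgroup.nontrivial_iff_ne_bot Q).2 h
  obtain ⟨n, hn, hc⟩ := hQ.nontrivial_iff_card.1 this
  obtain ⟨x, hx⟩ := exists_prime_orderOf_dvd_card' (G := Q) p (by rw [hc]; exact dvd_pow_self p hn.ne')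
  refine ⟨x, x.2, ?_, ?_⟩
  · intro h1
    have : x = 1 := Subtype.ext h1
    rw [this, orderOf_one] at hx
    exact (Fact.out : p.Prime).one_lt.ne hx
  · have := pow_orderOf_eq_one x
    rw [hx] at this
    exact_mod_cast congrArg Subtype.val this

theorem key1 {G : Type*} [Group G] [Finite G] (p : ℕ) [Fact p.Prime] (S : Sylow p G)
    (hcen : omega1 p (S : Subgroup G) ≤
      (S : Subgroup G) ⊓ Subgroup.centralizer ((S : Subgroup G) : Set G))
    (hfus : ControlsPFusion (S : Subgroup G) (Subgroup.normalizer ((S : Subgroup G) : Set G)))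
    (g : G) : ∃ m ∈ Subgroup.normalizer ((S : Subgroup G) : Set G),
      m⁻¹ * g ∈ LL (S : Subgroup G) (EE p (S : Subgroup G) g) := by
  obtain ⟨h, hh, c, hc, rfl⟩ := hfus ((S : Subgroup G) ⊓ conjSub g⁻¹ S) inf_le_left g
    (fun q hq => by
      have := (mem_conjSub_iff _ _ _).1 hq.2
      simpa using this)
  set g := h * c with hg
  set E := EE p (S : Subgroup G) g
  have hcE : c ∈ Subgroup.centralizer E := by
    refine Subgroup.centralizer_le ?_ hc
    rintro z ⟨h1, h2, h3⟩
    exact ⟨h1, (mem_conjSub_iff _ _ _).2 (by simpa using h3)⟩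
  have hS : (S : Subgroup G) ≤ LL S E := fun s hs =>
    Subgroup.subset_closure ⟨1, one_mem _, s, hs, by simp⟩
  have hcS : ((c⁻¹ • S : Sylow p G) : Subgroup G) ≤ LL S E := by
    intro x hx
    rw [Sylow.coe_subgroup_smul] at hx
    obtain ⟨s, hs, rfl⟩ := hx
    exact Subgroup.subset_closure ⟨c⁻¹, inv_mem hcE, s, hs, by simp⟩
  obtain ⟨l, hl⟩ := MulAction.exists_smul_eq (LL (S : Subgroup G) E)
    ((c⁻¹ • S : Sylow p G).subtype hcS) (S.subtype hS)
  simp_rw [Sylow.smul_subtype, Subgroup.smul_def, smul_smul] at hl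
  have hn := Sylow.smul_eq_iff_mem_normalizer.mp (Sylow.subtype_injective hl)
  refine ⟨h * (l * c⁻¹ : G)⁻¹, mul_mem hh (inv_mem hn), ?_⟩
  have : (h * (l * c⁻¹ : G)⁻¹)⁻¹ * g = l := by rw [hg]; group
  rw [this]
  exact l.2

open scoped commutatorElement in
theorem rho1_mem {G : Type*} [Group G] [Finite G] (p : ℕ) [Fact p.Prime]
    (SP : Subgroup G → Subgroup G) (S : Subgroup G) (P : Subgroup G)
    (hSP : IsSylowPSubgroupOf p (SP P) (Subgroup.normalizer (P : Set G)))
    (U : Subgroup G) (hU : IsPGroup p U) (hUP : U ≤ Subgroup.normalizer (P : Set G)) :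
    U ≤ rho SP S 1 P := by
  obtain ⟨h1, h2, h3⟩ := hSP
  let M := Subgroup.normalizer (P : Set G)
  let T : Sylow p M :=
    { toSubgroup := (SP P).subgroupOf M
      isPGroup' := h2.comap_subtype
      is_maximal' := by
        intro Q hQ hle
        have hm : IsPGroup p (Q.map M.subtype) := hQ.map _
        have := h3 (Q.map M.subtype) (Subgroup.map_subtype_le Q) hm (by
          intro x hx
          exact ⟨⟨x, h1 hx⟩, hle hx, rfl⟩)
        rw [← this]
        exact (Subgroup.comap_map_eq_self_of_injective M.subtype_injective Q).symm }
  obtain ⟨T', hT'⟩ := (hU.comap_subtype (K := M)).exists_le_sylow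
  obtain ⟨n, hn⟩ := MulAction.exists_smul_eq M T T'
  intro u hu
  have hu' : (⟨u, hUP hu⟩ : M) ∈ T' := hT' hu
  rw [← hn] at hu'
  obtain ⟨t, ht, hteq⟩ : (⟨u, hUP hu⟩ : M) ∈ ((n • T : Sylow p M) : Subgroup M) := hu'
  have hteq' : (n : G) * t * (n : G)⁻¹ = u := by
    have := congrArg Subtype.val hteq
    simpa using this
  have htS : (t : G) ∈ SP P := ht
  have : u = ⁅(n : G), (t : G)⁆ * t := by rw [← hteq']; simp [commutatorElement_def]
  rw [this]
  show _ ∈ SP P ⊔ _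
  exact mul_mem (Subgroup.mem_sup_right (Subgroup.commutator_mem_commutator n.2 t.2))
    (Subgroup.mem_sup_left htS)

theorem S_le_cent {G : Type*} [Group G] (p : ℕ) (S : Subgroup G)
    (hcen : omega1 p S ≤ S ⊓ Subgroup.centralizer (S : Set G)) {z s : G} (hz : z ∈ S)
    (hzp : z ^ p = 1) (hs : s ∈ S) : s ∈ Subgroup.centralizer {z} := by
  have := (hcen (Subgroup.subset_closure ⟨hz, hzp⟩)).2
  rw [Subgroup.mem_centralizer_singleton_iff]
  exact Subgroup.mem_centralizer_iff.1 this s hs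

theorem cent_le_norm {G : Type*} [Group G] (z : G) :
    Subgroup.centralizer {z} ≤ Subgroup.normalizer (Subgroup.zpowers z : Set G) := by
  rw [Subgroup.le_normalizer_iff]
  rintro c hc k ⟨n, rfl⟩
  rw [Subgroup.mem_centralizer_singleton_iff] at hc
  have : Commute c (z ^ n) := Commute.zpow_right hc n
  simp only
  rw [this.eq, mul_inv_cancel_right]
  exact ⟨n, rfl⟩

theorem LL_le {G : Type*} [Group G] [Finite G] (p : ℕ) [Fact p.Prime] (S : Sylow p G)
    (hcen : omega1 p (S : Subgroup G) ≤
      (S : Subgroup G) ⊓ Subgroup.centralizer ((S : Subgroup G) : Set G))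
    (SP : Subgroup G → Subgroup G)
    (hSP : ∀ P : Subgroup G, IsSylowPSubgroupOf p (SP P) (Subgroup.normalizer (P : Set G)))
    {z : G} (hz : z ∈ (S : Subgroup G)) (hzp : z ^ p = 1) :
    LL (S : Subgroup G) {z} ≤ rho SP S 1 (Subgroup.zpowers z) := by
  unfold LL
  rw [Subgroup.closure_le]
  rintro x ⟨c, hc, s, hs, rfl⟩
  have hle : conjSub c (S : Subgroup G) ≤
      Subgroup.normalizer (Subgroup.zpowers z : Set G) := by
    intro y hy
    rw [mem_conjSub_iff] at hy
    have h1 := S_le_cent p S.toSubgroup hcen hz hzp hy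
    have h2 := mul_mem (mul_mem hc h1) (inv_mem hc)
    have e : c * (c⁻¹ * y * c) * c⁻¹ = y := by group
    rw [e] at h2
    exact cent_le_norm z h2
  have hp : IsPGroup p (conjSub c (S : Subgroup G)) := S.isPGroup'.map _
  have h3 := rho1_mem p SP S.toSubgroup _ (hSP (Subgroup.zpowers z)) (conjSub c S) hp hle
  have h4 : c * s * c⁻¹ ∈ conjSub c (S : Subgroup G) := by
    rw [mem_conjSub_iff]
    have e : c⁻¹ * (c * s * c⁻¹) * c = s := by group
    rw [e]; exact hs
  exact h3 h4

theorem unit_p {k : Type*} [Field k] (p : ℕ) [Fact p.Prime] [CharP k p] (u : kˣ) (n : ℕ)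
    (h : u ^ p ^ n = 1) : u = 1 := by
  have : ExpChar k p := ExpChar.prime Fact.out
  apply Units.ext
  apply iterateFrobenius_inj k p n
  simp only [iterateFrobenius_def, Units.val_one, one_pow]
  rw [← Units.val_pow_eq_pow_val, h, Units.val_one]

theorem sub_inter {G : Type*} [Group G] {S P : Subgroup G} (hPS : P ≤ S) {g : G}
    (hg : g ∈ Subgroup.normalizer (P : Set G)) : P ≤ conjSub g S := by
  intro x hx
  rw [mem_conjSub_iff]
  exact hPS ((mem_norm' hg x).2 hx)

/-- the restriction to normalizers -/
def resN {G : Type*} [Group G] {k : Type*} [Field k] {S : Subgroup G} {χ : G → kˣ}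
    (h : IsWeakSHom S χ) (P : Subgroup G) (hP : P ≠ ⊥) (hPS : P ≤ S) :
    Subgroup.normalizer (P : Set G) →* kˣ where
  toFun x := χ x
  map_one' := h.1 1 (one_mem _)
  map_mul' x y := h.2.2 x y (by
    intro hb
    apply hP
    rw [eq_bot_iff, ← hb]
    exact le_inf (le_inf hPS (sub_inter hPS x.2)) (sub_inter hPS (mul_mem x.2 y.2)))

open scoped commutatorElement in
theorem chi_rho1 {G : Type*} [Group G] (p : ℕ) [Fact p.Prime]
    {k : Type*} [Field k] [CharP k p] {S : Subgroup G} {χ : G → kˣ}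
    (h : IsWeakSHom S χ) (SP : Subgroup G → Subgroup G) (P : Subgroup G)
    (hP : P ≠ ⊥) (hPS : P ≤ S)
    (hSP : IsSylowPSubgroupOf p (SP P) (Subgroup.normalizer (P : Set G)))
    {x : G} (hx : x ∈ rho SP S 1 P) : χ x = 1 := by
  let f := resN h P hP hPS
  have : rho SP S 1 P ≤ f.ker.map (Subgroup.normalizer (P : Set G)).subtype := by
    show SP P ⊔ _ ≤ _
    refine sup_le ?_ ?_
    · intro t ht
      refine ⟨⟨t, hSP.1 ht⟩, ?_, rfl⟩
      obtain ⟨n, hn⟩ := hSP.2.1 ⟨t, ht⟩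
      have hn' : (⟨t, hSP.1 ht⟩ : Subgroup.normalizer (P : Set G)) ^ p ^ n = 1 := by
        apply Subtype.ext
        have := congrArg Subtype.val hn
        simpa using this
      show f _ = 1
      apply unit_p p _ n
      rw [← map_pow, hn', map_one]
    · rw [Subgroup.commutator_le]
      intro a ha b hb
      refine ⟨⁅(⟨a, ha⟩ : Subgroup.normalizer (P : Set G)),
        (⟨b, hb⟩ : Subgroup.normalizer (P : Set G))⁆, ?_, rfl⟩
      show f _ = 1
      rw [map_commutatorElement]
      exact commutatorElement_eq_one_iff_commute.2 (Commute.all _ _)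
  obtain ⟨y, hy, rfl⟩ := this hx
  exact hy

theorem rho2_le {G : Type*} [Group G] (SP : Subgroup G → Subgroup G) (S P : Subgroup G)
    (hP : P ≠ ⊥) (hPS : P ≤ S) :
    Subgroup.normalizer (S : Set G) ⊓ rho SP S 1 P ≤ rho SP S 2 S := by
  show _ ≤ ⨆ Q ∈ {Q : Subgroup G | Q ≠ ⊥ ∧ Q ≤ S}, Subgroup.normalizer (S : Set G) ⊓ rho SP S 1 Q
  exact le_iSup₂_of_le (f := fun Q (_ : Q ∈ {Q : Subgroup G | Q ≠ ⊥ ∧ Q ≤ S}) =>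
    Subgroup.normalizer (S : Set G) ⊓ rho SP S 1 Q) P ⟨hP, hPS⟩ le_rfl

theorem chi_rho2 {G : Type*} [Group G] (p : ℕ) [Fact p.Prime]
    {k : Type*} [Field k] [CharP k p] {S : Subgroup G} (hS : S ≠ ⊥) {χ : G → kˣ}
    (h : IsWeakSHom S χ) (SP : Subgroup G → Subgroup G)
    (hSP : ∀ P : Subgroup G, IsSylowPSubgroupOf p (SP P) (Subgroup.normalizer (P : Set G)))
    {x : G} (hx : x ∈ rho SP S 2 S) : χ x = 1 := by
  have : rho SP S 2 S ≤
      (resN h S hS le_rfl).ker.map (Subgroup.normalizer (S : Set G)).subtype := by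
    show ⨆ Q ∈ {Q : Subgroup G | Q ≠ ⊥ ∧ Q ≤ S},
      Subgroup.normalizer (S : Set G) ⊓ rho SP S 1 Q ≤ _
    refine iSup₂_le ?_
    rintro Q ⟨hQ, hQS⟩ x ⟨hx1, hx2⟩
    exact ⟨⟨x, hx1⟩, chi_rho1 p h SP Q hQ hQS (hSP Q) hx2, rfl⟩
  obtain ⟨y, hy, rfl⟩ := this hx
  exact hy

theorem exists_z {G : Type*} [Group G] [Finite G] (p : ℕ) [Fact p.Prime] (S : Sylow p G)
    (g : G) (h : (S : Subgroup G) ⊓ conjSub g S ≠ ⊥) : ∃ z ∈ EE p (S : Subgroup G) g, z ≠ 1 := by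
  obtain ⟨z, ⟨h1, h2⟩, h3, h4⟩ := exists_p_elt p ((S : Subgroup G) ⊓ conjSub g S)
    (S.isPGroup'.to_le inf_le_left) h
  refine ⟨g⁻¹ * z * g, ⟨(mem_conjSub_iff _ _ _).1 h2, ?_, ?_⟩, ?_⟩
  · have := conj_pow (i := p) (a := g⁻¹) (b := z)
    rw [inv_inv] at this
    rw [this, h4]; simp
  · have e : g * (g⁻¹ * z * g) * g⁻¹ = z := by group
    rw [e]; exact h1
  · intro he
    apply h3
    have : z = g * (g⁻¹ * z * g) * g⁻¹ := by group
    rw [this, he]; simp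

theorem EE_inter {G : Type*} [Group G] {p : ℕ} {S : Subgroup G} {g z : G}
    (hz : z ∈ EE p S g) (hz1 : z ≠ 1) : S ⊓ conjSub g S ≠ ⊥ := by
  intro hb
  have : g * z * g⁻¹ ∈ S ⊓ conjSub g S :=
    ⟨hz.2.2, (mem_conjSub_iff _ _ _).2 (by simpa [mul_assoc] using hz.1)⟩
  rw [hb, Subgroup.mem_bot] at this
  exact hz1 (by simpa using this)

open Classical in
/-- extension -/
noncomputable def ext0 {G : Type*} [Group G] {k : Type*} [Field k] (S : Subgroup G)
    (φ : Subgroup.normalizer (S : Set G) →* kˣ) (m : G → Subgroup.normalizer (S : Set G))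
    (g : G) : kˣ :=
  if S ⊓ conjSub g S = ⊥ then 1 else φ (m g)

theorem stmt7 {G : Type*} [Group G] [Fintype G] (p : ℕ) [Fact p.Prime]
    (hdvd : p ∣ Fintype.card G) (k : Type*) [Field k] [CharP k p]
    (S : Sylow p G)
    (hcen : omega1 p (S : Subgroup G) ≤
      (S : Subgroup G) ⊓ Subgroup.centralizer ((S : Subgroup G) : Set G))
    (hfus : ControlsPFusion (S : Subgroup G) (Subgroup.normalizer ((S : Subgroup G) : Set G)))
    (SP : Subgroup G → Subgroup G)
    (hSP : ∀ P : Subgroup G, IsSylowPSubgroupOf p (SP P) (Subgroup.normalizer (P : Set G))) :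
    Nonempty ((weakSHomGroup k (S : Subgroup G)) ≃*
      (homsKillingRhoTwo k SP (S : Subgroup G))) := by
  have hS : (S : Subgroup G) ≠ ⊥ := S.ne_bot_of_dvd_card (by rwa [Nat.card_eq_fintype_card])
  choose m0 hm0 hm1 using key1 p S hcen hfus
  let m : G → Subgroup.normalizer ((S : Subgroup G) : Set G) := fun g => ⟨m0 g, hm0 g⟩
  let F : weakSHomGroup k (S : Subgroup G) →* homsKillingRhoTwo k SP (S : Subgroup G) :=
    { toFun := fun χ => ⟨resN χ.2 S hS le_rfl, fun x hx => chi_rho2 p hS χ.2 SP hSP hx⟩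
      map_one' := rfl
      map_mul' := fun _ _ => rfl }
  have hz2 : ∀ z : G, z ≠ 1 → Subgroup.zpowers z ≠ ⊥ := fun z hz h =>
    hz (Subgroup.zpowers_eq_bot.1 h)
  refine ⟨MulEquiv.ofBijective F ⟨?_, ?_⟩⟩
  · rw [injective_iff_map_eq_one]
    rintro ⟨χ, hχ⟩ hF
    have hN : ∀ n ∈ Subgroup.normalizer ((S : Subgroup G) : Set G), χ n = 1 := by
      intro n hn
      have := congrArg (fun f => f.1 ⟨n, hn⟩) hF
      exact this
    apply Subtype.ext
    funext g
    show χ g = 1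
    by_cases hg : (S : Subgroup G) ⊓ conjSub g S = ⊥
    · exact hχ.2.1 g hg
    obtain ⟨z, hz, hz1⟩ := exists_z p S g hg
    have hl := LL_le p S hcen SP hSP hz.1 hz.2.1
      (LL_anti S.toSubgroup (Set.singleton_subset_iff.2 hz) (hm1 g))
    have h1 := chi_rho1 p hχ SP _ (hz2 z hz1) (Subgroup.zpowers_le.2 hz.1) (hSP _) hl
    have h2 := hχ.2.2 (m0 g) ((m0 g)⁻¹ * g) (by
      rw [mul_inv_cancel_left, inf_eq_left.2 (sub_inter le_rfl (hm0 g))]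
      exact hg)
    rw [mul_inv_cancel_left, h1, hN _ (hm0 g), one_mul] at h2
    exact h2
  · rintro ⟨φ, hφ⟩
    have key : ∀ (g z : G) (n : Subgroup.normalizer ((S : Subgroup G) : Set G)),
        z ∈ EE p (S : Subgroup G) g → z ≠ 1 → (n : G)⁻¹ * g ∈ LL (S : Subgroup G) {z} →
        ext0 (S : Subgroup G) φ m g = φ n := by
      intro g z n hz hz1 hn
      unfold ext0
      rw [if_neg (EE_inter hz hz1)]
      have hl := LL_anti S.toSubgroup (Set.singleton_subset_iff.2 hz) (hm1 g)
      have hl2 : (n : G)⁻¹ * m0 g ∈ LL (S : Subgroup G) {z} := by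
        have := mul_mem hn (inv_mem hl)
        have e : (n : G)⁻¹ * g * ((m0 g)⁻¹ * g)⁻¹ = (n : G)⁻¹ * m0 g := by group
        rwa [e] at this
      have h3 : φ (n⁻¹ * m g) = 1 := by
        apply hφ
        exact rho2_le SP S.toSubgroup _ (hz2 z hz1) (Subgroup.zpowers_le.2 hz.1)
          ⟨(n⁻¹ * m g).2, LL_le p S hcen SP hSP hz.1 hz.2.1 hl2⟩
      rw [map_mul, map_inv, inv_mul_eq_one] at h3
      exact h3.symm
    have hres : ∀ n : Subgroup.normalizer ((S : Subgroup G) : Set G),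
        ext0 (S : Subgroup G) φ m n = φ n := by
      intro n
      have : (S : Subgroup G) ⊓ conjSub (n : G) S ≠ ⊥ := by
        rw [inf_eq_left.2 (sub_inter le_rfl n.2)]
        exact hS
      obtain ⟨z, hz, hz1⟩ := exists_z p S _ this
      exact key n z n hz hz1 (by rw [inv_mul_cancel]; exact one_mem _)
    have hw : IsWeakSHom (S : Subgroup G) (ext0 (S : Subgroup G) φ m) := by
      refine ⟨?_, ?_, ?_⟩
      · intro s hs
        have hsn := Subgroup.le_normalizer hs
        rw [hres ⟨s, hsn⟩]
        apply hφ
        exact rho2_le SP S.toSubgroup S.toSubgroup hS le_rfl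
          ⟨hsn, rho1_mem p SP S.toSubgroup S.toSubgroup (hSP S.toSubgroup) S.toSubgroup S.isPGroup' Subgroup.le_normalizer hs⟩
      · intro g hg
        unfold ext0
        rw [if_pos hg]
      · intro g h hgh
        obtain ⟨y, ⟨⟨y1, y2⟩, y3⟩, y4, y5⟩ := exists_p_elt p _
          (S.isPGroup'.to_le (inf_le_left.trans inf_le_left)) hgh
        replace y1 : y ∈ (S : Subgroup G) := y1
        replace y2 := (mem_conjSub_iff g y S.toSubgroup).1 y2
        replace y3 := (mem_conjSub_iff (g * h) y S.toSubgroup).1 y3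
        obtain ⟨z, rfl⟩ : ∃ z, y = (g * h) * z * (g * h)⁻¹ :=
          ⟨(g * h)⁻¹ * y * (g * h), by group⟩
        rw [conj_pow] at y5
        have hzp : z ^ p = 1 := conj_eq_one_iff.1 y5
        have hz1 : z ≠ 1 := by rintro rfl; simp at y4
        have e1 : (g * h)⁻¹ * (g * h * z * (g * h)⁻¹) * (g * h) = z := by group
        have e2 : g⁻¹ * (g * h * z * (g * h)⁻¹) * g = h * z * h⁻¹ := by group
        rw [e1] at y3
        rw [e2] at y2
        have hzh : z ∈ EE p (S : Subgroup G) h := ⟨y3, hzp, y2⟩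
        have hzgh : z ∈ EE p (S : Subgroup G) (g * h) := ⟨y3, hzp, y1⟩
        have hw2 : h * z * h⁻¹ ∈ EE p (S : Subgroup G) g :=
          ⟨y2, by rw [conj_pow, hzp]; simp, by
            have e : g * (h * z * h⁻¹) * g⁻¹ = g * h * z * (g * h)⁻¹ := by group
            rw [e]; exact y1⟩
        have hw1 : h * z * h⁻¹ ≠ 1 := by simpa using hz1
        have lh := LL_anti S.toSubgroup (Set.singleton_subset_iff.2 hzh) (hm1 h)
        have lg := LL_anti S.toSubgroup (Set.singleton_subset_iff.2 hw2) (hm1 g)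
        have hcz : (m0 h)⁻¹ * h ∈ Subgroup.centralizer {z} := by
          refine (?_ : LL (S : Subgroup G) {z} ≤ _) lh
          unfold LL
          rw [Subgroup.closure_le]
          rintro x ⟨c, hc, s, hs, rfl⟩
          exact mul_mem (mul_mem hc (S_le_cent p S.toSubgroup hcen y3 hzp hs)) (inv_mem hc)
        rw [Subgroup.mem_centralizer_singleton_iff] at hcz
        have hconj : h * z * h⁻¹ = m0 h * z * (m0 h)⁻¹ := by
          calc h * z * h⁻¹ = m0 h * ((m0 h)⁻¹ * h * z) * h⁻¹ := by group
            _ = _ := by rw [hcz]; group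
        rw [hconj] at lg
        have lg' := LL_conj (S : Subgroup G) (hm0 h) lg
        rw [key g _ (m g) hw2 hw1 (by rw [hconj]; exact lg),
          key h z (m h) hzh hz1 lh, ← map_mul]
        refine key _ z _ hzgh hz1 ?_
        have e : ((m g * m h : Subgroup.normalizer ((S : Subgroup G) : Set G)) : G)⁻¹ * (g * h)
            = ((m0 h)⁻¹ * ((m0 g)⁻¹ * g) * m0 h) * ((m0 h)⁻¹ * h) := by
          show (m0 g * m0 h)⁻¹ * (g * h) = _
          group
        rw [e]
        exact mul_mem lg' lh
    refine ⟨⟨_, hw⟩, ?_⟩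
    apply Subtype.ext
    apply MonoidHom.ext
    exact hres
end

section
/- Let p be an odd prime and let G be a finite group of order divisible by p whose Sylow p-subgroup S is metacyclic. Then N_G(S) controls p-fusion in G. -/
open Subgroup

/-- A group is metacyclic if it has a cyclic normal subgroup with cyclic quotient. -/
def IsMetacyclic (H : Type*) [Group H] : Prop :=
  ∃ N : Subgroup H, ∃ _ : N.Normal, IsCyclic N ∧ IsCyclic (H ⧸ N)

theorem mc_inj {H K : Type*} [Group H] [Group K] (f : H →* K) (hf : Function.Injective f)
    (h : IsMetacyclic K) : IsMetacyclic H := by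
  obtain ⟨N, hN, h1, h2⟩ := h
  refine ⟨N.comap f, inferInstance, ?_, ?_⟩
  · refine isCyclic_of_injective (f.subgroupComap N) ?_
    intro x y hxy
    have := congrArg Subtype.val hxy
    exact Subtype.ext (hf this)
  · refine isCyclic_of_injective (QuotientGroup.map (N.comap f) N f le_rfl) ?_
    rw [← MonoidHom.ker_eq_bot_iff, QuotientGroup.ker_map]
    exact (QuotientGroup.map_mk'_self _)

theorem mc_surj {H K : Type*} [Group H] [Group K] (f : H →* K) (hf : Function.Surjective f)
    (h : IsMetacyclic H) : IsMetacyclic K := by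
  obtain ⟨N, hN, h1, h2⟩ := h
  have hn := hN.map f hf
  refine ⟨N.map f, hn, ?_, ?_⟩
  · exact isCyclic_of_surjective (f.subgroupMap N) (f.subgroupMap_surjective N)
  · refine isCyclic_of_surjective (QuotientGroup.map N (N.map f) f (le_comap_map f N)) ?_
    intro x
    obtain ⟨k, rfl⟩ := QuotientGroup.mk_surjective x
    obtain ⟨h, rfl⟩ := hf k
    exact ⟨(h : H ⧸ N), rfl⟩

theorem cyc_exp {H : Type*} [Group H] [Finite H] (p : ℕ) (h : IsCyclic H)
    (hx : ∀ x : H, x ^ p = 1) : Nat.card H ∣ p := by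
  obtain ⟨g, hg⟩ := h.exists_ofOrder_eq_natCard
  rw [← hg]
  exact orderOf_dvd_of_pow_eq_one (hx g)

theorem mc_exp {H : Type*} [Group H] [Finite H] (p : ℕ) (h : IsMetacyclic H)
    (hx : ∀ x : H, x ^ p = 1) : Nat.card H ∣ p ^ 2 := by
  obtain ⟨N, hN, h1, h2⟩ := h
  rw [card_eq_card_quotient_mul_card_subgroup N, pow_two]
  refine mul_dvd_mul (cyc_exp p h2 ?_) (cyc_exp p h1 ?_)
  · intro x
    obtain ⟨k, rfl⟩ := QuotientGroup.mk_surjective x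
    rw [← QuotientGroup.mk_pow, hx, QuotientGroup.mk_one]
  · intro x
    exact Subtype.ext (hx x)

theorem inter_center {P : Type*} [Group P] [Finite P] (p : ℕ) [Fact p.Prime] (hP : IsPGroup p P)
    (V : Subgroup P) [V.Normal] (hV : V ≠ ⊥) : ∃ v ∈ V, v ≠ 1 ∧ ∀ t, t * v = v * t := by
  have hP' : IsPGroup p (ConjAct P) := hP
  have hnt : Nontrivial V := (Subgroup.nontrivial_iff_ne_bot V).2 hV
  have hd : p ∣ Nat.card V := by
    obtain ⟨n, hn, h⟩ := (hP.to_subgroup V).nontrivial_iff_card.1 hnt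
    rw [h]; exact dvd_pow_self p hn.ne'
  obtain ⟨b, hb, hb1⟩ := hP'.exists_fixed_point_of_prime_dvd_card_of_fixed_point V hd (a := 1)
    (by intro g; simp)
  refine ⟨b, b.2, fun h => hb1 (Subtype.ext h.symm), fun t => ?_⟩
  have := congrArg Subtype.val (hb (ConjAct.toConjAct t))
  have h2 : t * (b : P) * t⁻¹ = b := this
  exact mul_inv_eq_iff_eq_mul.1 h2

theorem coatom_index {R : Type*} [Group R] [Finite R] (p : ℕ) [Fact p.Prime] (hR : IsPGroup p R)
    (m : Subgroup R) (hm : IsCoatom m) : m.Normal ∧ m.index = p := by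
  have : Group.IsNilpotent R := hR.isNilpotent
  have hn : m.Normal := (Group.normalizerCondition_of_isNilpotent).normal_of_coatom m hm
  refine ⟨hn, ?_⟩
  obtain ⟨a, ha⟩ := IsPGroup.iff_card.1 hR
  obtain ⟨b, hb⟩ := IsPGroup.iff_card.1 (hR.to_subgroup m)
  have hmul := m.card_mul_index
  have hne : m.index ≠ 1 := by rw [Ne, Subgroup.index_eq_one]; exact hm.1
  have hlt : b < a := by
    obtain ⟨c, hc⟩ := hR.index m
    rw [ha, hb, hc, ← pow_add] at hmul
    have := Nat.pow_right_injective (Fact.out : p.Prime).two_le hmul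
    have : c ≠ 0 := by rintro rfl; exact hne (by simpa using hc)
    omega
  obtain ⟨K, hK, hmK⟩ := Sylow.exists_subgroup_card_pow_succ (G := R) (p := p) (n := b)
    (by rw [ha]; exact pow_dvd_pow p hlt) hb
  have hK1 : K = ⊤ := by
    rcases hm.le_iff.1 hmK with h | h
    · exact h
    · exfalso
      rw [h, hb] at hK
      have := Nat.pow_right_injective (Fact.out : p.Prime).two_le hK
      omega
  rw [hK1, Subgroup.card_top] at hK
  rw [hb, hK, pow_succ] at hmul
  exact Nat.eq_of_mul_eq_mul_left (pow_pos (Fact.out : p.Prime).pos b) hmul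

theorem frat_pow {R : Type*} [Group R] [Finite R] (p : ℕ) [Fact p.Prime] (hR : IsPGroup p R)
    (x : R) : x ^ p ∈ frattini R := by
  unfold frattini Order.radical
  simp only [Subgroup.mem_iInf]
  intro m hm
  obtain ⟨h1, h2⟩ := coatom_index p hR m hm
  rw [← h2]; exact m.pow_index_mem x

theorem frat_comm {R : Type*} [Group R] [Finite R] (p : ℕ) [Fact p.Prime] (hR : IsPGroup p R)
    (x y : R) : (y * x)⁻¹ * (x * y) ∈ frattini R := by
  unfold frattini Order.radical
  simp only [Subgroup.mem_iInf]
  intro m hm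
  obtain ⟨h1, h2⟩ := coatom_index p hR m hm
  rw [← QuotientGroup.eq]
  have : IsCyclic (R ⧸ m) := isCyclic_of_prime_card (p := p) (by rw [← Subgroup.index_eq_card, h2])
  let := IsCyclic.commGroup (α := R ⧸ m)
  rw [QuotientGroup.mk_mul, QuotientGroup.mk_mul]
  exact mul_comm _ _

theorem burnside_aut {R : Type*} [Group R] [Finite R] (p : ℕ) [Fact p.Prime] (hR : IsPGroup p R)
    (α : MulAut R) (h : ∀ r, r⁻¹ * α r ∈ frattini R) (q : ℕ) [Fact q.Prime] (hqp : q ≠ p)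
    (hq : α ^ q = 1) : α = 1 := by
  classical
  have key : ∀ r : R, ∃ s : R, α s = s ∧ r⁻¹ * s ∈ frattini R := by
    intro r
    let X := {s : R // r⁻¹ * s ∈ frattini R}
    let f : Function.End X := fun s => ⟨α s, by
      have := mul_mem s.2 (h s)
      simpa [mul_assoc] using this⟩
    have hfn : ∀ n (s : X), ((f ^ n) s : X).1 = (α ^ n) s.1 := by
      intro n
      induction n with
      | zero => intro s; rfl
      | succ n ih => intro s; rw [pow_succ', pow_succ']; exact congrArg α (ih s)
    have hf : f ^ q ^ 1 = 1 := by
      funext s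
      apply Subtype.ext
      rw [pow_one, hfn, hq]; rfl
    have : Fintype X := Fintype.ofFinite X
    have hc := Equiv.Perm.card_fixedPoints_modEq hf
    have hX : Nat.card X = Nat.card (frattini R) := by
      refine Nat.card_congr ⟨fun s => ⟨r⁻¹ * s, s.2⟩, fun s => ⟨r * s, by simp⟩, ?_, ?_⟩
      · intro s; simp
      · intro s; simp
    obtain ⟨n, hn⟩ := IsPGroup.iff_card.1 (hR.to_subgroup (frattini R))
    by_contra hcon
    push Not at hcon
    have he : IsEmpty (Function.fixedPoints f) := by
      refine ⟨fun s => hcon s.1.1 (congrArg Subtype.val s.2) s.1.2⟩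
    rw [Fintype.card_eq_zero (α := Function.fixedPoints f), ← Nat.card_eq_fintype_card, hX, hn] at hc
    have := (Nat.modEq_zero_iff_dvd.1 hc)
    have := (Fact.out : q.Prime).dvd_of_dvd_pow this
    exact hqp ((Nat.prime_dvd_prime_iff_eq Fact.out Fact.out).1 this)
  let F : Subgroup R := (α.toMonoidHom).eqLocus (MonoidHom.id R)
  have hF : F ⊔ frattini R = ⊤ := by
    rw [eq_top_iff]
    intro r _
    obtain ⟨s, hs, hrs⟩ := key r
    have : r = s * (r⁻¹ * s)⁻¹ := by group
    rw [this]
    exact mul_mem_sup hs (inv_mem hrs)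
  have := frattini_nongenerating hF
  ext r
  have : r ∈ F := this ▸ mem_top r
  exact this

theorem aut_pgroup {R : Type*} [Group R] [Finite R] (p : ℕ) [Fact p.Prime] (hR : IsPGroup p R)
    (A : Subgroup (MulAut R)) (hA : ∀ α ∈ A, ∀ r, r⁻¹ * α r ∈ frattini R) : IsPGroup p A := by
  have : Finite (MulAut R) := Finite.of_injective (fun f : MulAut R => (f : R → R)) DFunLike.coe_injective
  rw [isPGroup_iff_primeFactors_card_subset (Fact.out : p.Prime).ne_zero]
  intro q hq
  have hqp := Nat.prime_of_mem_primeFactors hq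
  have : Fact q.Prime := ⟨hqp⟩
  rw [(Fact.out : p.Prime).primeFactors, Finset.mem_singleton]
  by_contra hne
  obtain ⟨a, ha⟩ := exists_prime_orderOf_dvd_card' q (Nat.dvd_of_mem_primeFactors hq)
  have h1 : a = 1 := by
    apply Subtype.ext
    refine burnside_aut p hR a.1 (hA a.1 a.2) q hne ?_
    have := pow_orderOf_eq_one a
    rw [ha] at this
    exact congrArg Subtype.val this
  rw [h1, orderOf_one] at ha
  exact hqp.one_lt.ne ha

theorem sylow_rel {N : Type*} [Group N] [Finite N] (p : ℕ) [Fact p.Prime] (T : Sylow p N)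
    (M : Subgroup N) [M.Normal] : ¬ p ∣ (T : Subgroup N).relIndex M := by
  intro h
  have h1 : (T : Subgroup N).relIndex M * M.index = ((T : Subgroup N) ⊓ M).index := by
    rw [← inf_relIndex_right, relIndex_mul_index inf_le_right]
  have h2 : M.relIndex (T : Subgroup N) * (T : Subgroup N).index = ((T : Subgroup N) ⊓ M).index := by
    rw [← inf_relIndex_right, inf_comm, relIndex_mul_index inf_le_left]
  have h3 : M.relIndex (T : Subgroup N) * ((T : Subgroup N) ⊔ M).index = M.index := by
    rw [← relIndex_sup_right, relIndex_mul_index le_sup_right]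
  have h4 : (T : Subgroup N).relIndex M * ((T : Subgroup N) ⊔ M).index = (T : Subgroup N).index := by
    have h0 : M.relIndex (T : Subgroup N) ≠ 0 := by
      intro h0; rw [h0, zero_mul] at h3; exact M.index_ne_zero_of_finite h3.symm
    apply Nat.eq_of_mul_eq_mul_left (Nat.pos_of_ne_zero h0)
    rw [h2, ← h1, ← h3]; ring
  exact T.not_dvd_index (h4 ▸ h.mul_right _)

theorem frat_arg {N : Type*} [Group N] [Finite N] (p : ℕ) [Fact p.Prime] (T : Sylow p N)
    (M : Subgroup N) [M.Normal] (n : N) :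
    ∃ m ∈ M, m * n ∈ normalizer (((T : Subgroup N) ⊓ M : Subgroup N) : Set N) := by
  let P : Sylow p M := IsPGroup.toSylow (P := (T : Subgroup N).subgroupOf M)
    (T.2.comap_subtype) (sylow_rel p T M)
  have h := Sylow.normalizer_sup_eq_top P
  have hP : (P : Subgroup M).map M.subtype = (T : Subgroup N) ⊓ M := by
    change ((T : Subgroup N).subgroupOf M).map M.subtype = _
    rw [subgroupOf_map_subtype]
  rw [hP, sup_comm] at h
  have hn : n ∈ M ⊔ normalizer (((T : Subgroup N) ⊓ M : Subgroup N) : Set N) := h ▸ mem_top n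
  obtain ⟨y, hy, z, hz, rfl⟩ := mem_sup_of_normal_left.1 hn
  exact ⟨y⁻¹, inv_mem hy, by simpa using hz⟩

theorem conj_sylow {N : Type*} [Group N] [Finite N] (p : ℕ) [Fact p.Prime] (T : Sylow p N)
    (X : Subgroup N) (h1 : (T : Subgroup N) ≤ X) (w : N) (h2 : ∀ t ∈ T, w * t * w⁻¹ ∈ X) :
    ∃ x ∈ X, x * w ∈ normalizer ((T : Subgroup N) : Set N) := by
  have h2' : ((w • T : Sylow p N) : Subgroup N) ≤ X := by
    rintro _ ⟨t, ht, rfl⟩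
    exact h2 t ht
  obtain ⟨x, hx⟩ := MulAction.exists_smul_eq X ((w • T).subtype h2') (T.subtype h1)
  refine ⟨x, x.2, ?_⟩
  refine Sylow.smul_eq_iff_mem_normalizer.1 ?_
  rw [Sylow.smul_subtype] at hx
  have := Sylow.subtype_injective hx
  rw [mul_smul]
  exact this

theorem span2 {M : Type*} [Group M] [Finite M] (p : ℕ) [Fact p.Prime] (V L X : Subgroup M)
    (hV : Nat.card V = p ^ 2) (hL : Nat.card L = p) (hLV : L ≤ V) (e1 e2 : M) (h1 : e1 ∈ L)
    (h11 : e1 ≠ 1) (h2 : e2 ∈ V) (h22 : e2 ∉ L) (hX1 : e1 ∈ X) (hX2 : e2 ∈ X) : V ≤ X := by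
  have hLX : L ≤ X := by
    intro l hl
    have hg : (⟨e1, h1⟩ : L) ≠ 1 := fun h => h11 (congrArg Subtype.val h)
    obtain ⟨k, hk⟩ := mem_zpowers_of_prime_card hL hg (g' := ⟨l, hl⟩)
    have hk : e1 ^ k = l := congrArg Subtype.val hk
    rw [← hk]; exact zpow_mem hX1 k
  have hd : Nat.card (X ⊓ V : Subgroup M) ∣ p ^ 2 := hV ▸ card_dvd_of_le inf_le_right
  obtain ⟨i, hi, hc⟩ := (Nat.dvd_prime_pow Fact.out).1 hd
  have hlt : L < X ⊓ V := by
    refine lt_of_le_of_ne (le_inf hLX hLV) ?_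
    intro h; exact h22 (h ▸ ⟨hX2, h2⟩)
  have hcl : Nat.card L < Nat.card (X ⊓ V : Subgroup M) := by
    by_contra hcon
    exact hlt.ne (eq_of_le_of_card_ge hlt.le (not_lt.1 hcon))
  rw [hL, hc] at hcl
  have hi2 : i = 2 := by
    have : 1 < i := (Nat.pow_lt_pow_iff_right (Fact.out : p.Prime).one_lt).1 (by simpa using hcl)
    omega
  have : X ⊓ V = V := eq_of_le_of_card_ge inf_le_right (by rw [hc, hV, hi2])
  exact this ▸ inf_le_left

theorem line {P : Type*} [Group P] [Finite P] (p : ℕ) [Fact p.Prime] (hP : IsPGroup p P)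
    (V : Subgroup P) [V.Normal] (hV : Nat.card V ∣ p ^ 2) (t0 v0 : P) (hv0 : v0 ∈ V)
    (hnc : t0 * v0 ≠ v0 * t0) : ∃ L : Subgroup P, L ≤ V ∧ Nat.card V = p ^ 2 ∧ Nat.card L = p ∧
      (∀ t, ∀ l ∈ L, t * l = l * t) ∧ ∀ t, ∀ v ∈ V, t * v * t⁻¹ * v⁻¹ ∈ L := by
  let L := V ⊓ center P
  have hVb : V ≠ ⊥ := by
    rintro rfl
    rw [mem_bot] at hv0; subst hv0; simp at hnc
  have hLc : ∀ t, ∀ l ∈ L, t * l = l * t := fun t l hl => mem_center_iff.1 hl.2 t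
  obtain ⟨e, he, he1, hec⟩ := inter_center p hP V hVb
  have heL : e ∈ L := ⟨he, mem_center_iff.2 hec⟩
  have hv0L : v0 ∉ L := fun h => hnc (hLc t0 v0 h)
  have hcl : Nat.card L < Nat.card V := by
    by_contra hcon
    have : L = V := eq_of_le_of_card_ge inf_le_left (not_lt.1 hcon)
    exact hv0L (this ▸ hv0)
  obtain ⟨i, hi, hc⟩ := (Nat.dvd_prime_pow Fact.out).1 hV
  obtain ⟨j, hj, hc'⟩ := (Nat.dvd_prime_pow (Fact.out : p.Prime)).1
    ((card_dvd_of_le (inf_le_left : L ≤ V)).trans hV)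
  have hj0 : j ≠ 0 := by
    rintro rfl
    have hb : L = ⊥ := Subgroup.card_eq_one.1 (by rw [hc', pow_zero])
    rw [hb, mem_bot] at heL; exact he1 heL
  rw [hc, hc'] at hcl
  have := (Nat.pow_lt_pow_iff_right (Fact.out : p.Prime).one_lt).1 hcl
  have hi2 : i = 2 := by omega
  have hj1 : j = 1 := by omega
  subst hi2 hj1
  rw [pow_one] at hc'
  refine ⟨L, inf_le_left, hc, hc', hLc, ?_⟩
  let f := QuotientGroup.mk' L
  have hf : Function.Surjective f := QuotientGroup.mk'_surjective L
  have hn : (V.map f).Normal := Normal.map inferInstance f hf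
  have hb : V.map f ≠ ⊥ := by
    intro hb
    have : f v0 ∈ V.map f := mem_map_of_mem f hv0
    rw [hb, mem_bot] at this
    exact hv0L ((QuotientGroup.eq_one_iff v0).1 this)
  obtain ⟨_, ⟨v, hv, rfl⟩, hv1, hvc⟩ := inter_center p (hP.to_quotient L) (V.map f) hb
  have hle : V ≤ (center (P ⧸ L)).comap f := by
    refine span2 p V L _ hc hc' inf_le_left e v heL he1 hv ?_ ?_ ?_
    · intro h; exact hv1 ((QuotientGroup.eq_one_iff v).2 h)
    · rw [mem_comap]
      have : f e = 1 := (QuotientGroup.eq_one_iff e).2 heL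
      rw [this]; exact one_mem _
    · exact mem_center_iff.2 hvc
  intro t x hx
  have h1 := mem_center_iff.1 (hle hx) (f t)
  refine (QuotientGroup.eq_one_iff _).1 ?_
  change f (t * x * t⁻¹ * x⁻¹) = 1
  rw [map_mul, map_mul, map_mul, h1]
  simp

theorem lineM {M : Type*} [Group M] [Finite M] (p : ℕ) [Fact p.Prime] (T : Subgroup M)
    (hT : IsPGroup p T) (V : Subgroup M) [V.Normal] (hVT : V ≤ T) (hV : Nat.card V ∣ p ^ 2)
    (t0 v0 : M) (ht0 : t0 ∈ T) (hv0 : v0 ∈ V)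
    (hnc : t0 * v0 ≠ v0 * t0) : ∃ L : Subgroup M, L ≤ V ∧ Nat.card V = p ^ 2 ∧ Nat.card L = p ∧
      (∀ t ∈ T, ∀ l ∈ L, t * l = l * t) ∧ ∀ t ∈ T, ∀ v ∈ V, t * v * t⁻¹ * v⁻¹ ∈ L := by
  have hcV : Nat.card (V.subgroupOf T) = Nat.card V :=
    Nat.card_congr (subgroupOfEquivOfLe hVT).toEquiv
  obtain ⟨L, h1, h2, h3, h4, h5⟩ := line p hT (V.subgroupOf T) (hcV ▸ hV) ⟨t0, ht0⟩ ⟨v0, hVT hv0⟩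
    hv0 (fun h => hnc (congrArg Subtype.val h))
  refine ⟨L.map T.subtype, ?_, hcV ▸ h2, ?_, ?_, ?_⟩
  · rintro _ ⟨x, hx, rfl⟩
    exact h1 hx
  · rw [← h3]
    exact (Nat.card_congr (L.equivMapOfInjective T.subtype T.subtype_injective).toEquiv).symm
  · rintro t ht _ ⟨x, hx, rfl⟩
    exact congrArg Subtype.val (h4 ⟨t, ht⟩ x hx)
  · intro t ht v hv
    exact ⟨_, h5 ⟨t, ht⟩ ⟨v, hVT hv⟩ hv, rfl⟩

theorem conj_pow_aux {M : Type*} [Group M] (t v c : M) (h : t * v * t⁻¹ = c * v)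
    (hc : t * c = c * t) (k : ℕ) : t ^ k * v * (t ^ k)⁻¹ = c ^ k * v := by
  induction k with
  | zero => simp
  | succ k ih =>
    have hc2 : t * c ^ k = c ^ k * t := (Commute.pow_right (show Commute t c from hc) k)
    calc t ^ (k+1) * v * (t ^ (k+1))⁻¹ = t * (t ^ k * v * (t ^ k)⁻¹) * t⁻¹ := by
          rw [pow_succ']; group
      _ = t * c ^ k * v * t⁻¹ := by rw [ih]; group
      _ = c ^ k * (t * v * t⁻¹) := by rw [hc2]; group
      _ = c ^ (k+1) * v := by rw [h, pow_succ, mul_assoc]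

theorem mul_pow_aux {M : Type*} [Group M] (t v c : M) (h : t * v * t⁻¹ = c * v)
    (hc : t * c = c * t) (hcv : v * c = c * v) (k : ℕ) :
    (v * t) ^ k = v ^ k * c ^ (k.choose 2) * t ^ k := by
  induction k with
  | zero => simp
  | succ k ih =>
    have h1 : t ^ k * v = c ^ k * v * t ^ k := by
      rw [← conj_pow_aux t v c h hc k]; group
    have h3 : ∀ j : ℕ, c ^ j * v = v * c ^ j := fun j =>
      ((Commute.pow_right (show Commute v c from hcv) j)).symm
    rw [pow_succ, ih, Nat.choose_succ_succ' k 1, Nat.choose_one_right]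
    calc v ^ k * c ^ (k.choose 2) * t ^ k * (v * t)
        = v ^ k * c ^ (k.choose 2) * (t ^ k * v) * t := by group
      _ = v ^ k * (c ^ (k.choose 2) * c ^ k * v) * (t ^ k * t) := by rw [h1]; group
      _ = v ^ k * (c ^ (k + k.choose 2) * v) * (t ^ k * t) := by rw [← pow_add, add_comm]
      _ = v ^ (k+1) * c ^ (k + k.choose 2) * t ^ (k+1) := by
        rw [h3, pow_succ, pow_succ]; group

theorem genT {M : Type*} [Group M] [Finite M] (p : ℕ) [Fact p.Prime] (V T L : Subgroup M)
    (hV : Nat.card V = p ^ 2) (hL : Nat.card L = p) (hLV : L ≤ V)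
    (hTL : ∀ t ∈ T, ∀ l ∈ L, t * l = l * t) (hTV : ∀ t ∈ T, ∀ v ∈ V, t * v * t⁻¹ * v⁻¹ ∈ L)
    (t v0 : M) (ht : t ∈ T) (hv0 : v0 ∈ V) (hnc : t * v0 ≠ v0 * t) (x : M)
    (hx1 : ∀ l ∈ L, x * l = l * x) (hx2 : ∀ v ∈ V, x * v * x⁻¹ * v⁻¹ ∈ L) :
    ∃ s ∈ T, ∀ v ∈ V, (s⁻¹ * x) * v = v * (s⁻¹ * x) := by
  have hv0L : v0 ∉ L := fun h => hnc (hTL t ht v0 h)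
  obtain ⟨c, hc⟩ : ∃ c, c = t * v0 * t⁻¹ * v0⁻¹ := ⟨_, rfl⟩
  have hcL : c ∈ L := hc ▸ hTV t ht v0 hv0
  have hc1 : c ≠ 1 := by
    rintro rfl
    apply hnc
    have := mul_inv_eq_one.1 hc.symm
    exact mul_inv_eq_iff_eq_mul.1 this
  have hg : (⟨c, hcL⟩ : L) ≠ 1 := fun h => hc1 (congrArg Subtype.val h)
  obtain ⟨k, hk⟩ := mem_powers_of_prime_card hL hg (g' := ⟨_, hx2 v0 hv0⟩)
  have hk : c ^ k = x * v0 * x⁻¹ * v0⁻¹ := congrArg Subtype.val hk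
  have h1 := conj_pow_aux t v0 c (by rw [hc]; group) (hTL t ht c hcL) k
  rw [hk] at h1
  have h2 : t ^ k * v0 * (t ^ k)⁻¹ = x * v0 * x⁻¹ := by rw [h1]; group
  refine ⟨t ^ k, pow_mem ht k, ?_⟩
  have hle : V ≤ centralizer {(t ^ k)⁻¹ * x} := by
    refine span2 p V L _ hV hL hLV c v0 hcL hc1 hv0 hv0L ?_ ?_
    · rw [mem_centralizer_singleton_iff]
      have a1 : Commute (t ^ k) c := hTL _ (pow_mem ht k) c hcL
      have a2 : Commute x c := hx1 c hcL
      exact ((a1.inv_left).mul_left a2).symm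
    · rw [mem_centralizer_singleton_iff]
      have : x * v0 = t ^ k * v0 * (t ^ k)⁻¹ * x := by rw [h2]; group
      rw [mul_assoc, this]; group
  intro v hv
  exact (mem_centralizer_singleton_iff.1 (hle hv)).symm

theorem core_end {M : Type*} [Group M] [Finite M] (p : ℕ) [Fact p.Prime] (hp : Odd p)
    (V : Subgroup M) [V.Normal]
    (hexp : ∀ v ∈ V, v ^ p = 1) (hcomm : ∀ v ∈ V, ∀ w ∈ V, v * w = w * v) (T : Sylow p M)
    (hmc : IsMetacyclic (T : Subgroup M)) (hVT : V ≤ T)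
    (hTC : ∀ t ∈ T, (∀ v ∈ V, t * v = v * t) → t ∈ V)
    (L : Subgroup M) (hV : Nat.card V = p ^ 2) (hLV : L ≤ V)
    (hTL : ∀ t ∈ T, ∀ l ∈ L, t * l = l * t) (hTV : ∀ t ∈ T, ∀ v ∈ V, t * v * t⁻¹ * v⁻¹ ∈ L)
    (w : M) (hw : ∀ v ∈ V, w * v * w⁻¹ = v⁻¹) : ∀ t ∈ T, t ∈ V := by
  -- t w t⁻¹ w⁻¹ type elements centralise V
  have hcent : ∀ w : M, (∀ v ∈ V, w * v * w⁻¹ = v⁻¹) → ∀ t : M, ∀ v ∈ V,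
      (w * t * w⁻¹ * t⁻¹) * v = v * (w * t * w⁻¹ * t⁻¹) := by
    intro w hw t v hv
    have hnV : ∀ v ∈ V, ∀ g, g * v * g⁻¹ ∈ V := fun v hv g => Normal.conj_mem inferInstance v hv g
    have e1 : t⁻¹ * v * t ∈ V := by simpa using hnV v hv t⁻¹
    have e2 : w⁻¹ * (t⁻¹ * v * t) * w = (t⁻¹ * v * t)⁻¹ := by
      have := hw _ (inv_mem e1)
      rw [inv_inv] at this
      calc w⁻¹ * (t⁻¹ * v * t) * w = w⁻¹ * (w * (t⁻¹ * v * t)⁻¹ * w⁻¹) * w := by rw [this]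
        _ = _ := by group
    have e3 : w * v⁻¹ * w⁻¹ = v := by
      have := hw _ (inv_mem hv)
      rwa [inv_inv] at this
    calc (w * t * w⁻¹ * t⁻¹) * v
        = w * t * (w⁻¹ * (t⁻¹ * v * t) * w) * w⁻¹ * t⁻¹ := by group
      _ = (w * v⁻¹ * w⁻¹) * (w * t * w⁻¹ * t⁻¹) := by rw [e2]; group
      _ = _ := by rw [e3]
  obtain ⟨y, hy, hyw⟩ := conj_sylow p T ((T : Subgroup M) ⊔ centralizer (V : Set M)) le_sup_left w
    (by
      intro t ht
      have : w * t * w⁻¹ = t * (t⁻¹ * (w * t * w⁻¹ * t⁻¹) * t⁻¹⁻¹) := by group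
      rw [this]
      refine mul_mem_sup ht (Normal.conj_mem inferInstance _ ?_ _)
      rw [mem_centralizer_iff]
      intro v hv
      exact (hcent w hw t v hv).symm)
  obtain ⟨s, hs, c, hc, rfl⟩ := mem_sup_of_normal_right.1 hy
  have hw'N : c * w ∈ normalizer ((T : Subgroup M) : Set M) := by
    have : s ∈ normalizer ((T : Subgroup M) : Set M) := le_normalizer hs
    have := mul_mem (inv_mem this) hyw
    simpa [mul_assoc] using this
  have hcw : ∀ v ∈ V, (c * w) * v * (c * w)⁻¹ = v⁻¹ := by
    intro v hv
    have h1 := (mem_centralizer_iff.1 hc) v⁻¹ (inv_mem hv)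
    calc (c * w) * v * (c * w)⁻¹ = c * (w * v * w⁻¹) * c⁻¹ := by group
      _ = v⁻¹ := by rw [hw v hv, ← h1]; group
  generalize c * w = w' at hw'N hcw
  have hpow : ∀ t ∈ T, t ^ p = 1 := by
    intro t ht
    have hcT : ∀ v ∈ V, t ^ p * v = v * t ^ p := by
      intro v hv
      have h := conj_pow_aux t v (t * v * t⁻¹ * v⁻¹) (by group) (hTL t ht _ (hTV t ht v hv)) p
      rw [hexp _ (hLV (hTV t ht v hv)), one_mul] at h
      exact mul_inv_eq_iff_eq_mul.1 h
    have htp : t ^ p ∈ V := hTC _ (pow_mem ht p) hcT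
    have hst : w' * t * w'⁻¹ ∈ T := (mem_normalizer_iff.1 hw'N t).1 ht
    have hv : w' * t * w'⁻¹ * t⁻¹ ∈ V :=
      hTC _ (mul_mem hst (inv_mem ht)) (fun v hv => hcent w' hcw t v hv)
    obtain ⟨v, hvd⟩ : ∃ v, v = w' * t * w'⁻¹ * t⁻¹ := ⟨_, rfl⟩
    rw [← hvd] at hv
    have hcL := hTV t ht v hv
    have h1 : (v * t) ^ p = t ^ p := by
      rw [mul_pow_aux t v (t * v * t⁻¹ * v⁻¹) (by group) (hTL t ht _ hcL)
        (hcomm _ hv _ (hLV hcL)), hexp v hv]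
      have h2 : p ∣ p.choose 2 := by
        refine (Fact.out : p.Prime).dvd_choose_self (by norm_num) ?_
        have := (Fact.out : p.Prime).two_le
        rcases this.lt_or_eq with h | h
        · exact h
        · subst h; exact absurd hp (by decide)
      obtain ⟨k, hk⟩ := h2
      rw [hk, pow_mul, hexp _ (hLV hcL)]; simp
    have h2 : v * t = w' * t * w'⁻¹ := by rw [hvd]; group
    rw [h2, conj_pow, hcw _ htp] at h1
    have h3 : (t ^ p) ^ 2 = 1 := by
      rw [pow_two]; nth_rewrite 1 [← h1]; simp
    have h4 := hexp _ htp
    have hcop : Nat.gcd 2 p = 1 := (Nat.coprime_two_left).2 hp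
    have := pow_gcd_eq_one.2 ⟨h3, h4⟩
    rwa [hcop, pow_one] at this
  have hcard := mc_exp p hmc (fun x => Subtype.ext (hpow x.1 x.2))
  have hVeq : V = (T : Subgroup M) := by
    refine eq_of_le_of_card_ge hVT ?_
    rw [hV]; exact Nat.le_of_dvd (pow_pos (Fact.out : p.Prime).pos 2) hcard
  intro t ht
  rw [hVeq]; exact ht

theorem core {M : Type*} [Group M] [Finite M] (p : ℕ) [Fact p.Prime] (hp : Odd p)
    (V : Subgroup M) [V.Normal]
    (hexp : ∀ v ∈ V, v ^ p = 1) (hcomm : ∀ v ∈ V, ∀ w ∈ V, v * w = w * v) (T : Sylow p M)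
    (hmc : IsMetacyclic (T : Subgroup M)) (hVT : V ≤ T)
    (hTC : ∀ t ∈ T, (∀ v ∈ V, t * v = v * t) → t ∈ V) (m t0 : M) (ht0 : t0 ∈ T) :
    ∃ s ∈ T, ∀ v ∈ V, (s⁻¹ * (m * t0 * m⁻¹)) * v = v * (s⁻¹ * (m * t0 * m⁻¹)) := by
  have hnV : ∀ v ∈ V, ∀ g, g * v * g⁻¹ ∈ V := fun v hv g => Normal.conj_mem inferInstance v hv g
  by_cases hall : ∀ t ∈ T, t ∈ V
  · refine ⟨1, one_mem T, fun v hv => ?_⟩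
    rw [inv_one, one_mul]
    exact hcomm _ (hnV _ (hall t0 ht0) m) v hv
  obtain ⟨u, hu, v0, hv0, hnc⟩ : ∃ u ∈ T, ∃ v ∈ V, u * v ≠ v * u := by
    push Not at hall
    obtain ⟨u, hu, huV⟩ := hall
    by_contra hcon
    push Not at hcon
    exact huV (hTC u hu (hcon u hu))
  have hVc : Nat.card V ∣ p ^ 2 := by
    refine mc_exp p (mc_inj (inclusion hVT) (inclusion_injective hVT) hmc) ?_
    intro x; exact Subtype.ext (hexp x.1 x.2)
  obtain ⟨L, hLV, hV, hL, hTL, hTV⟩ := lineM p T T.2 V hVT hVc u v0 hu hv0 hnc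
  let T' : Subgroup M := (T : Subgroup M).map (MulAut.conj m).toMonoidHom
  have hT' : ∀ t ∈ T, m * t * m⁻¹ ∈ T' := fun t ht => ⟨t, ht, rfl⟩
  have hVT' : V ≤ T' := by
    intro v hv
    have h1 := hT' _ (hVT (hnV v hv m⁻¹))
    have h2 : m * (m⁻¹ * v * m⁻¹⁻¹) * m⁻¹ = v := by group
    rwa [h2] at h1
  obtain ⟨L', hLV', -, hL', hTL', hTV'⟩ := lineM p T' (T.2.map _) V hVT' hVc (m * u * m⁻¹)
    (m * v0 * m⁻¹) (hT' u hu) (hnV v0 hv0 m) (by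
      intro h
      apply hnc
      have : m * (u * v0) * m⁻¹ = m * (v0 * u) * m⁻¹ := by
        calc m * (u * v0) * m⁻¹ = m * u * m⁻¹ * (m * v0 * m⁻¹) := by group
          _ = _ := by rw [h]; group
      exact mul_left_cancel (mul_right_cancel this))
  by_cases hLL : L' ≤ L
  · have hLL : L' = L := eq_of_le_of_card_ge hLL (by rw [hL, hL'])
    subst hLL
    exact genT p V T L' hV hL hLV hTL hTV u v0 hu hv0 hnc _ (hTL' _ (hT' t0 ht0))
      (hTV' _ (hT' t0 ht0))
  exfalso
  obtain ⟨e2, he2, he2L⟩ := SetLike.not_le_iff_exists.1 hLL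
  -- e1
  obtain ⟨e1, he1⟩ : ∃ e1, e1 = u * e2 * u⁻¹ * e2⁻¹ := ⟨_, rfl⟩
  have he1L : e1 ∈ L := he1 ▸ hTV u hu e2 (hLV' he2)
  have hLbot : ∃ l ∈ L, l ≠ 1 := by
    have : L ≠ ⊥ := by
      rintro rfl
      rw [card_bot] at hL
      exact (Fact.out : p.Prime).one_lt.ne hL
    exact (ne_bot_iff_exists_ne_one (H := L)).1 this |>.elim fun a ha =>
      ⟨a.1, a.2, fun h => ha (Subtype.ext h)⟩
  obtain ⟨l0, hl0, hl01⟩ := hLbot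
  have he11 : e1 ≠ 1 := by
    intro h
    rw [h] at he1
    have h1 : u * e2 = e2 * u := mul_inv_eq_iff_eq_mul.1 (mul_inv_eq_one.1 he1.symm)
    have hle : V ≤ centralizer {u} := by
      refine span2 p V L _ hV hL hLV l0 e2 hl0 hl01 (hLV' he2) he2L ?_ ?_
      · rw [mem_centralizer_singleton_iff]; exact (hTL u hu l0 hl0).symm
      · rw [mem_centralizer_singleton_iff]; exact h1.symm
    exact hnc (mem_centralizer_singleton_iff.1 (hle hv0)).symm
  have he21 : e2 ≠ 1 := fun h => he2L (h ▸ one_mem L)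
  have he1L' : e1 ∉ L' := by
    intro h
    have hle : L ≤ L' := by
      intro l hl
      have hg : (⟨e1, he1L⟩ : L) ≠ 1 := fun h => he11 (congrArg Subtype.val h)
      obtain ⟨k, hk⟩ := mem_zpowers_of_prime_card hL hg (g' := ⟨l, hl⟩)
      have hk : e1 ^ k = l := congrArg Subtype.val hk
      rw [← hk]; exact zpow_mem h k
    have : L = L' := eq_of_le_of_card_ge hle (by rw [hL, hL'])
    exact hLL this.ge
  -- t'
  obtain ⟨t', ht', ht'd⟩ : ∃ t' ∈ T', t' = m * u * m⁻¹ := ⟨_, hT' u hu, rfl⟩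
  obtain ⟨f, hf⟩ : ∃ f, f = t' * e1 * t'⁻¹ * e1⁻¹ := ⟨_, rfl⟩
  have hfL : f ∈ L' := hf ▸ hTV' t' ht' e1 (hLV he1L)
  have hf1 : f ≠ 1 := by
    intro h
    rw [h] at hf
    have h1 : t' * e1 = e1 * t' := mul_inv_eq_iff_eq_mul.1 (mul_inv_eq_one.1 hf.symm)
    have hle : V ≤ centralizer {t'} := by
      refine span2 p V L' _ hV hL' hLV' e2 e1 he2 he21 (hLV he1L) he1L' ?_ ?_
      · rw [mem_centralizer_singleton_iff]; exact (hTL' t' ht' e2 he2).symm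
      · rw [mem_centralizer_singleton_iff]; exact h1.symm
    have h2 := (mem_centralizer_singleton_iff.1 (hle (hnV v0 hv0 m))).symm
    rw [ht'd] at h2
    apply hnc
    have : m * (u * v0) * m⁻¹ = m * (v0 * u) * m⁻¹ := by
      calc m * (u * v0) * m⁻¹ = m * u * m⁻¹ * (m * v0 * m⁻¹) := by group
        _ = _ := by rw [h2]; group
    exact mul_left_cancel (mul_right_cancel this)
  have hg : (⟨f, hfL⟩ : L') ≠ 1 := fun h => hf1 (congrArg Subtype.val h)
  obtain ⟨k, hk⟩ := mem_powers_of_prime_card hL' hg (g' := ⟨_, inv_mem he2⟩)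
  have hk : f ^ k = e2⁻¹ := congrArg Subtype.val hk
  have hl1 := conj_pow_aux t' e1 f (by rw [hf]; group) (hTL' t' ht' f hfL) k
  rw [hk] at hl1
  have hl2 := hTL' _ (pow_mem ht' k) e2 he2
  generalize t' ^ k = l at hl1 hl2
  have hu1 : MulAut.conj u e1 = e1 := by
    rw [MulAut.conj_apply, hTL u hu e1 he1L]; group
  have hu2 : MulAut.conj u e2 = e1 * e2 := by
    rw [MulAut.conj_apply, he1]; group
  have hl1 : MulAut.conj l e1 = e2⁻¹ * e1 := hl1
  have hl2 : MulAut.conj l e2 = e2 := by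
    rw [MulAut.conj_apply, hl2]; group
  have h12 : e1 * e2 = e2 * e1 := hcomm _ (hLV he1L) _ (hLV' he2)
  have hw1 : MulAut.conj (u * l * u) e1 = e2⁻¹ := by
    simp only [map_mul, MulAut.mul_apply, map_inv, hu1, hl1, hu2]
    group
  have hw2 : MulAut.conj (u * l * u) e2 = e1 := by
    rw [map_mul, map_mul, MulAut.mul_apply, MulAut.mul_apply, hu2, map_mul, hl1, hl2, mul_assoc,
      h12, inv_mul_cancel_left, hu1]
  generalize u * l * u = w at hw1 hw2
  have hinv : ∀ v ∈ V, (w * w) * v * (w * w)⁻¹ = v⁻¹ := by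
    let X : Subgroup M :=
      { carrier := {x | x ∈ V ∧ MulAut.conj (w * w) x = x⁻¹}
        one_mem' := ⟨one_mem V, by simp⟩
        mul_mem' := by
          rintro a b ⟨ha, ha'⟩ ⟨hb, hb'⟩
          refine ⟨mul_mem ha hb, ?_⟩
          rw [map_mul, ha', hb', ← mul_inv_rev, hcomm a ha b hb]
        inv_mem' := by
          rintro a ⟨ha, ha'⟩
          exact ⟨inv_mem ha, by rw [map_inv, ha']⟩ }
    have hle : V ≤ X := by
      refine span2 p V L _ hV hL hLV e1 e2 he1L he11 (hLV' he2) he2L ?_ ?_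
      · refine ⟨hLV he1L, ?_⟩
        rw [map_mul, MulAut.mul_apply, hw1, map_inv, hw2]
      · refine ⟨hLV' he2, ?_⟩
        rw [map_mul, MulAut.mul_apply, hw2, hw1]
    intro v hv
    exact (hle hv).2
  exact hall (core_end p hp V hexp hcomm T hmc hVT hTC L hV hLV hTL hTV _ hinv)

theorem lemF {N : Type*} [Group N] [Finite N] (p : ℕ) [Fact p.Prime] (R : Subgroup N) [R.Normal]
    (T : Sylow p N) (hRT : R ≤ T) (M : Subgroup N) [M.Normal]
    (hM : ∀ x ∈ M, ∃ s ∈ (T : Subgroup N) ⊓ M, ∃ c ∈ centralizer (R : Set N), x = s * c)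
    (hT : ¬ (T : Subgroup N) ⊓ M ≤ R) (n : N) :
    ∃ c ∈ centralizer (R : Set N), ∃ Q : Subgroup N, R < Q ∧ Q ≤ T ∧
      c * n ∈ normalizer (Q : Set N) := by
  obtain ⟨m, hm, hmn⟩ := frat_arg p T M n
  obtain ⟨s, hs, c, hc, rfl⟩ := hM m hm
  refine ⟨c, hc, ((T : Subgroup N) ⊓ M) ⊔ R, ?_, sup_le inf_le_left hRT, ?_⟩
  · refine lt_of_le_of_ne le_sup_right ?_
    intro h
    exact hT (h ▸ le_sup_left)
  · have h1 : c * n ∈ normalizer (((T : Subgroup N) ⊓ M : Subgroup N) : Set N) := by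
      have := mul_mem (inv_mem (le_normalizer hs)) hmn
      simpa [mul_assoc] using this
    rw [mem_normalizer_iff_map_conj_eq] at h1 ⊢
    have h2 : c * n ∈ normalizer (R : Set N) := by rw [normalizer_eq_top]; exact mem_top _
    rw [mem_normalizer_iff_map_conj_eq] at h2
    rw [Subgroup.map_sup, h1, h2]

theorem propB {N : Type*} [Group N] [Finite N] (p : ℕ) [Fact p.Prime] (hp : Odd p)
    (R : Subgroup N) [R.Normal]
    (T : Sylow p N) (hRT : R ≤ T) (hne : ¬ (T : Subgroup N) ≤ R)
    (hmc : IsMetacyclic (T : Subgroup N)) (n : N) :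
    ∃ c ∈ centralizer (R : Set N), ∃ Q : Subgroup N, R < Q ∧ Q ≤ T ∧
      c * n ∈ normalizer (Q : Set N) := by
  have hRp : IsPGroup p R := T.2.to_le hRT
  let Φ : Subgroup N := (frattini R).map R.subtype
  have hΦ : Φ.Normal := ConjAct.normal_of_characteristic_of_normal
  have hΦR : Φ ≤ R := map_subtype_le _
  let f := QuotientGroup.mk' Φ
  have hf : Function.Surjective f := QuotientGroup.mk'_surjective Φ
  let V := R.map f
  have hVn : V.Normal := Normal.map inferInstance f hf
  have hker : ∀ x, f x = 1 ↔ x ∈ Φ := fun x => QuotientGroup.eq_one_iff x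
  let K := (centralizer (V : Set (N ⧸ Φ))).comap f
  have hKn : K.Normal := inferInstance
  have hKmem : ∀ k, k ∈ K ↔ ∀ r ∈ R, f k * f r = f r * f k := by
    intro k
    constructor
    · intro h r hr
      exact (mem_centralizer_iff.1 h (f r) (mem_map_of_mem f hr)).symm
    · intro h
      refine mem_centralizer_iff.2 ?_
      rintro _ ⟨r, hr, rfl⟩
      exact (h r hr).symm
  have hK : ∀ x ∈ K, ∃ s ∈ (T : Subgroup N) ⊓ K, ∃ c ∈ centralizer (R : Set N), x = s * c := by
    let φ : N →* MulAut R := MulAut.conjNormal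
    have hkerφ : φ.ker = centralizer (R : Set N) := by
      ext x
      rw [MonoidHom.mem_ker, mem_centralizer_iff]
      constructor
      · intro h r hr
        have := congrArg (fun α : MulAut R => (α ⟨r, hr⟩ : N)) h
        have h2 : x * r * x⁻¹ = r := this
        exact (mul_inv_eq_iff_eq_mul.1 h2).symm
      · intro h
        ext r
        change x * (r : N) * x⁻¹ = r
        exact mul_inv_eq_iff_eq_mul.2 (h r r.2).symm
    have hA : IsPGroup p (K.map φ) := by
      refine aut_pgroup p hRp _ ?_
      rintro _ ⟨k, hk, rfl⟩ r
      have h1 := (hKmem k).1 hk r r.2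
      have h2 : (r : N)⁻¹ * (k * r * k⁻¹) ∈ Φ := by
        rw [← hker, map_mul, map_mul, map_mul, h1]; simp
      obtain ⟨y, hy, hye⟩ := h2
      have : r⁻¹ * (φ k) r = y := Subtype.ext hye.symm
      rw [this]; exact hy
    have hle : K ≤ ((T : Subgroup N) ⊓ K) ⊔ centralizer (R : Set N) := by
      rw [← relIndex_eq_one]
      have d1 := relIndex_dvd_of_le_left K
        (le_sup_left : (T : Subgroup N) ⊓ K ≤ ((T : Subgroup N) ⊓ K) ⊔ centralizer (R : Set N))
      have d2 := relIndex_dvd_of_le_left K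
        (le_sup_right : centralizer (R : Set N) ≤ ((T : Subgroup N) ⊓ K) ⊔ centralizer (R : Set N))
      rw [inf_relIndex_right] at d1
      rw [← hkerφ, relIndex_ker, hkerφ] at d2
      obtain ⟨a, ha⟩ := IsPGroup.iff_card.1 hA
      rw [ha] at d2
      obtain ⟨b, -, hb⟩ := (Nat.dvd_prime_pow (Fact.out : p.Prime)).1 d2
      rcases Nat.eq_zero_or_pos b with h0 | h0
      · rw [hb, h0, pow_zero]
      · exfalso
        rw [hb] at d1
        exact sylow_rel p T K ((dvd_pow_self p h0.ne').trans d1)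
    intro x hx
    obtain ⟨s, hs, c, hc, rfl⟩ := mem_sup_of_normal_right.1 (hle hx)
    exact ⟨s, hs, c, hc, rfl⟩
  by_cases hTK : (T : Subgroup N) ⊓ K ≤ R
  swap
  · exact lemF p R T hRT K hK hTK n
  have hcore := core p hp V ?_ ?_ (T.mapSurjective hf) ?_ ?_ ?_
  · have hTKn : ((T : Subgroup N) ⊔ K).Normal := by
      constructor
      intro x hx g
      obtain ⟨t, ht, k, hk, rfl⟩ := mem_sup_of_normal_right.1 hx
      have : g * (t * k) * g⁻¹ = (g * t * g⁻¹) * (g * k * g⁻¹) := by group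
      rw [this]
      refine mul_mem ?_ (mem_sup_right (hKn.conj_mem k hk g))
      obtain ⟨_, ⟨s, hs, rfl⟩, h⟩ := hcore (f g) (f t) (mem_map_of_mem f ht)
      have : g * t * g⁻¹ = s * (s⁻¹ * (g * t * g⁻¹)) := by group
      rw [this]
      refine mul_mem_sup hs ((hKmem _).2 ?_)
      intro r hr
      simpa using h (f r) (mem_map_of_mem f hr)
    refine lemF p R T hRT ((T : Subgroup N) ⊔ K) ?_ ?_ n
    · intro x hx
      obtain ⟨t, ht, k, hk, rfl⟩ := mem_sup_of_normal_right.1 hx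
      obtain ⟨s, hs, c, hc, rfl⟩ := hK k hk
      exact ⟨t * s, ⟨mul_mem ht hs.1, mem_sup_left (mul_mem ht hs.1)⟩, c, hc, by group⟩
    · rw [inf_eq_left.2 le_sup_left]; exact hne
  · rintro _ ⟨r, hr, rfl⟩
    rw [← map_pow, hker]
    exact ⟨_, frat_pow p hRp ⟨r, hr⟩, rfl⟩
  · rintro _ ⟨r, hr, rfl⟩ _ ⟨s, hs, rfl⟩
    rw [← map_mul, ← map_mul]
    refine (QuotientGroup.eq).2 ?_
    exact ⟨_, frat_comm p hRp ⟨s, hs⟩ ⟨r, hr⟩, rfl⟩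
  · exact mc_surj (f.subgroupMap (T : Subgroup N)) (f.subgroupMap_surjective _) hmc
  · exact map_mono hRT
  · rintro _ ⟨t, ht, rfl⟩ h
    refine mem_map_of_mem f (hTK ⟨ht, (hKmem t).2 ?_⟩)
    intro r hr
    exact h (f r) (mem_map_of_mem f hr)

/-- elements of the product of the normalizer of S and the centralizer of Q. -/
def Good {G : Type*} [Group G] (S Q : Subgroup G) (g : G) : Prop :=
  ∃ h ∈ normalizer (S : Set G), ∃ c ∈ centralizer (Q : Set G), g = h * c

theorem Good.mono {G : Type*} [Group G] {S Q Q' : Subgroup G} {g : G} (h : Good S Q g)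
    (hQ : Q' ≤ Q) : Good S Q' g := by
  obtain ⟨a, ha, c, hc, rfl⟩ := h
  exact ⟨a, ha, c, centralizer_le hQ hc, rfl⟩

theorem Good.cent {G : Type*} [Group G] {S Q : Subgroup G} {c : G}
    (hc : c ∈ centralizer (Q : Set G)) : Good S Q c :=
  ⟨1, one_mem _, c, hc, by simp⟩

theorem Good.comp {G : Type*} [Group G] {S Q Q' : Subgroup G} {g g' : G} (h : Good S Q g)
    (hQ : ∀ q ∈ Q, g * q * g⁻¹ ∈ Q') (h' : Good S Q' g') : Good S Q (g' * g) := by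
  obtain ⟨a, ha, c, hc, rfl⟩ := h
  obtain ⟨a', ha', c', hc', rfl⟩ := h'
  refine ⟨a' * a, mul_mem ha' ha, c * ((a * c)⁻¹ * c' * (a * c)), ?_, by group⟩
  refine mul_mem hc ?_
  generalize a * c = g at hQ
  rw [mem_centralizer_iff]
  intro q hq
  have := mem_centralizer_iff.1 hc' _ (hQ q hq)
  calc q * (g⁻¹ * c' * g) = g⁻¹ * (g * q * g⁻¹ * c') * g := by group
    _ = _ := by rw [this]; group

theorem Good.inv {G : Type*} [Group G] {S Q Q' : Subgroup G} {g : G} (h : Good S Q g)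
    (hQ : ∀ q ∈ Q', g⁻¹ * q * g ∈ Q) : Good S Q' g⁻¹ := by
  obtain ⟨a, ha, c, hc, rfl⟩ := h
  refine ⟨a⁻¹, inv_mem ha, a * c⁻¹ * a⁻¹, ?_, by group⟩
  rw [mem_centralizer_iff]
  intro q hq
  have h1 := hQ q hq
  have h2 := mem_centralizer_iff.1 hc _ h1
  have h3 : a⁻¹ * q * a = c * ((a * c)⁻¹ * q * (a * c)) * c⁻¹ := by group
  have h4 : c * ((a * c)⁻¹ * q * (a * c)) * c⁻¹ = (a * c)⁻¹ * q * (a * c) := by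
    rw [← h2]; group
  have h5 : a⁻¹ * q * a * c = c * (a⁻¹ * q * a) := by rw [h3, h4, h2]
  have h6 : c⁻¹ * (a⁻¹ * q * a) = (a⁻¹ * q * a) * c⁻¹ := by
    rw [inv_mul_eq_iff_eq_mul, ← mul_assoc, ← h5]; group
  calc q * (a * c⁻¹ * a⁻¹) = a * ((a⁻¹ * q * a) * c⁻¹) * a⁻¹ := by group
    _ = _ := by rw [← h6]; group
def cj {G : Type*} [Group G] (a : G) (Q : Subgroup G) : Subgroup G :=
  Q.map (MulAut.conj a).toMonoidHom

theorem mem_cj {G : Type*} [Group G] {a x : G} {Q : Subgroup G} :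
    x ∈ cj a Q ↔ a⁻¹ * x * a ∈ Q := by
  unfold cj
  rw [Subgroup.mem_map]
  constructor
  · rintro ⟨y, hy, rfl⟩
    simpa [mul_assoc] using hy
  · intro h
    exact ⟨_, h, by simp [mul_assoc]⟩

theorem card_cj {G : Type*} [Group G] (a : G) (Q : Subgroup G) :
    Nat.card (cj a Q) = Nat.card Q :=
  Nat.card_congr (Q.equivMapOfInjective _ (MulAut.conj a).injective).toEquiv.symm

theorem pg_cj {G : Type*} [Group G] {p : ℕ} (a : G) {Q : Subgroup G} (h : IsPGroup p Q) :
    IsPGroup p (cj a Q) := h.map _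

theorem conj_mem_cj {G : Type*} [Group G] {a x : G} {Q : Subgroup G} (h : x ∈ Q) :
    a * x * a⁻¹ ∈ cj a Q := by
  rw [mem_cj]; simpa [mul_assoc] using h

theorem norm_cj {G : Type*} [Group G] {a x : G} {Q : Subgroup G} :
    x ∈ normalizer (cj a Q : Set G) ↔ a⁻¹ * x * a ∈ normalizer (Q : Set G) := by
  rw [Subgroup.mem_normalizer_iff, Subgroup.mem_normalizer_iff]
  constructor
  · intro h y
    have := h (a * y * a⁻¹)
    simp only [mem_cj] at this
    simpa [mul_assoc] using this
  · intro h y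
    have := h (a⁻¹ * y * a)
    simp only [mem_cj]
    simpa [mul_assoc] using this

open scoped Pointwise in
theorem pg_to_sylow {G : Type*} [Group G] [Finite G] {p : ℕ} [Fact p.Prime] (S : Sylow p G)
    {P : Subgroup G} (h : IsPGroup p P) : ∃ a : G, ∀ x ∈ P, a * x * a⁻¹ ∈ (S : Subgroup G) := by
  obtain ⟨T, hT⟩ := h.exists_le_sylow
  obtain ⟨a, ha⟩ := MulAction.exists_smul_eq G T S
  refine ⟨a, fun x hx => ?_⟩
  have h1 : MulAut.conj a • x ∈ MulAut.conj a • (T : Subgroup G) :=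
    Subgroup.smul_mem_pointwise_smul _ _ _ (hT hx)
  rw [← ha]
  exact h1

theorem exN {G : Type*} [Group G] [Finite G] {p : ℕ} [Fact p.Prime] (S : Sylow p G)
    (Q : Subgroup G) : ∃ a : G, ∃ R : Subgroup G, R = cj a Q ∧ ∃ T : Sylow p (normalizer (R : Set G)),
      (∀ t ∈ T, (t : G) ∈ (S : Subgroup G)) ∧
      ∀ x ∈ (S : Subgroup G) ⊓ normalizer (Q : Set G), a * x * a⁻¹ ∈ (S : Subgroup G) := by
  have h0 : IsPGroup p ((S : Subgroup G).subgroupOf (normalizer (Q : Set G))) :=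
    S.2.comap_of_injective _ (Subgroup.subtype_injective _)
  obtain ⟨P, hP⟩ := h0.exists_le_sylow
  obtain ⟨a, ha⟩ := pg_to_sylow S
    (P := (P : Subgroup (normalizer (Q : Set G))).map (Subgroup.subtype _)) (P.2.map _)
  let e : normalizer (cj a Q : Set G) →* normalizer (Q : Set G) :=
    { toFun := fun x => ⟨a⁻¹ * x * a, norm_cj.1 x.2⟩
      map_one' := by ext; simp
      map_mul' := by intro x y; ext; simp [mul_assoc] }
  have he : Function.Injective e := by
    intro x y hxy
    have := congrArg Subtype.val hxy
    ext
    simpa [e] using this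
  have hs : Function.Surjective e := by
    intro y
    refine ⟨⟨a * y * a⁻¹, norm_cj.2 (by simp [mul_assoc])⟩, ?_⟩
    ext; simp [e, mul_assoc]
  refine ⟨a, _, rfl, P.comapOfInjective e he (by rw [MonoidHom.range_eq_top.2 hs]; exact le_top), ?_, ?_⟩
  · intro t ht
    have h1 : e t ∈ (P : Subgroup (normalizer (Q : Set G))) := ht
    have := ha _ (Subgroup.mem_map_of_mem _ h1)
    simpa [e, mul_assoc] using this
  · intro x hx
    refine ha x ⟨⟨x, hx.2⟩, hP ?_, rfl⟩
    exact hx.1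

theorem normgrow {G : Type*} [Group G] [Finite G] {p : ℕ} [Fact p.Prime] (S : Sylow p G)
    {Q : Subgroup G} (hQ : Q < S) : Q < (S : Subgroup G) ⊓ normalizer (Q : Set G) := by
  have hS : Group.IsNilpotent (S : Subgroup G) := S.2.isNilpotent
  have h1 := Group.normalizerCondition_of_isNilpotent (G := (S : Subgroup G))
    (Q.subgroupOf S) (lt_top_iff_ne_top.2 (by
      intro h; exact hQ.not_ge (Subgroup.subgroupOf_eq_top.1 h)))
  refine lt_of_le_of_ne (le_inf hQ.le Subgroup.le_normalizer) ?_
  intro h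
  refine h1.not_ge ?_
  intro x hx
  rw [Subgroup.mem_subgroupOf, h]
  refine ⟨x.2, ?_⟩
  rw [Subgroup.mem_normalizer_iff] at hx
  show (x : G) ∈ normalizer (Q : Set G)
  rw [Subgroup.mem_normalizer_iff]
  intro y
  constructor
  · intro hy
    exact (hx ⟨y, hQ.le hy⟩).1 hy
  · intro hy
    have hyS : y ∈ (S : Subgroup G) := by
      have := mul_mem (mul_mem (inv_mem x.2) (hQ.le hy)) x.2
      simpa [mul_assoc] using this
    exact (hx ⟨y, hyS⟩).2 hy

theorem fuse {G : Type*} [Group G] [Finite G] (p : ℕ) [Fact p.Prime] (hp : Odd p)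
    (S : Sylow p G) (hmc : IsMetacyclic (S : Subgroup G)) (m : ℕ) :
    ∀ Q : Subgroup G, Q ≤ S → Nat.card G - Nat.card Q = m → ∀ g : G,
      (∀ q ∈ Q, g * q * g⁻¹ ∈ (S : Subgroup G)) → Good (S : Subgroup G) Q g := by
  induction m using Nat.strong_induction_on with
  | _ m ih =>
  intro Q hQ hm g hg
  have hcjle : cj g Q ≤ S := by
    intro x hx
    have := hg _ (mem_cj.1 hx)
    simpa [mul_assoc] using this
  rcases eq_or_lt_of_le hQ with rfl | hlt
  · refine ⟨g, ?_, 1, one_mem _, by simp⟩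
    have h1 : cj g (S : Subgroup G) = S :=
      Subgroup.eq_of_le_of_card_ge hcjle (card_cj _ _).ge
    rw [Subgroup.mem_normalizer_iff]
    intro x
    constructor
    · exact hg x
    · intro h
      have h : g * x * g⁻¹ ∈ (S : Subgroup G) := h
      rw [← h1, mem_cj] at h
      simpa [mul_assoc] using h
  have IH : ∀ Q' : Subgroup G, Q' ≤ S → Nat.card Q < Nat.card Q' → ∀ g : G,
      (∀ q ∈ Q', g * q * g⁻¹ ∈ (S : Subgroup G)) → Good (S : Subgroup G) Q' g := by
    intro Q' h1 h2 g h3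
    have : Nat.card Q' ≤ Nat.card G := Subgroup.card_le_card_group Q'
    exact ih (Nat.card G - Nat.card Q') (by omega) Q' h1 rfl g h3
  have hlts : ∀ b, cj b Q ≤ S → cj b Q < S := by
    intro b hb
    refine lt_of_le_of_ne hb ?_
    intro h
    have h2 : Nat.card Q = Nat.card (S : Subgroup G) := by rw [← h, card_cj]
    exact hlt.ne (Subgroup.eq_of_le_of_card_ge hQ h2.ge)
  have cardlt : ∀ {A B : Subgroup G}, A < B → Nat.card A < Nat.card B := by
    intro A B h
    refine lt_of_le_of_ne (Subgroup.card_le_of_le h.le) ?_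
    intro h2
    exact h.ne (Subgroup.eq_of_le_of_card_ge h.le h2.ge)
  obtain ⟨a, R, hR, T, hT, ha⟩ := exN S Q
  have hN := normgrow S hlt
  have Ga : Good (S : Subgroup G) Q a :=
    (IH _ inf_le_left (cardlt hN) a ha).mono hN.le
  have hRS : R ≤ S := by
    intro x hx
    rw [hR] at hx
    have := ha _ (hN.le (mem_cj.1 hx))
    simpa [mul_assoc] using this
  have hcR : Nat.card R = Nat.card Q := by rw [hR]; exact card_cj _ _
  -- conjugating p-subgroups of the normalizer into T
  have hconj : ∀ P : Subgroup G, IsPGroup p P → P ≤ normalizer (R : Set G) →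
      ∃ n ∈ normalizer (R : Set G), ∀ x ∈ P,
        ∃ h : n * x * n⁻¹ ∈ normalizer (R : Set G), ⟨n * x * n⁻¹, h⟩ ∈ T := by
    intro P hP hPN
    have h1 : IsPGroup p (P.subgroupOf (normalizer (R : Set G))) :=
      hP.comap_of_injective _ (Subgroup.subtype_injective _)
    obtain ⟨n, hn⟩ := pg_to_sylow T h1
    refine ⟨n, n.2, fun x hx => ⟨mul_mem (mul_mem n.2 (hPN hx)) (inv_mem n.2), ?_⟩⟩
    exact hn ⟨x, hPN hx⟩ hx
  -- main claim
  have main : ∀ n ∈ normalizer (R : Set G), Good (S : Subgroup G) R n := by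
    intro n hn
    have hRp : IsPGroup p R := S.2.to_le hRS
    have hRN : R ≤ normalizer (R : Set G) := Subgroup.le_normalizer
    have hsub : R.subgroupOf (normalizer (R : Set G)) ≤ T := by
      obtain ⟨k, hk, hk2⟩ := hconj R hRp hRN
      intro x hx
      have hx : (x : G) ∈ R := hx
      have h3 : k⁻¹ * x * k ∈ R := by
        have := (Subgroup.mem_normalizer_iff.1 (inv_mem hk) (x : G)).1 hx
        simpa using this
      obtain ⟨h4, h5⟩ := hk2 _ h3
      have h6 : x = ⟨k * (k⁻¹ * x * k) * k⁻¹, h4⟩ := by ext; simp [mul_assoc]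
      rw [h6]
      exact h5
    have hne : ¬ (T : Subgroup (normalizer (R : Set G))) ≤
        R.subgroupOf (normalizer (R : Set G)) := by
      intro h
      have h7 := normgrow S (hR ▸ hlts a (hR ▸ hRS) : R < S)
      obtain ⟨k, hk, hk2⟩ := hconj _ (S.2.to_le (inf_le_left : _ ⊓ normalizer (R : Set G) ≤ _))
        inf_le_right
      refine h7.not_ge ?_
      intro x hx
      obtain ⟨h4, h5⟩ := hk2 x hx
      exact (Subgroup.mem_normalizer_iff.1 hk x).2 (h h5)
    have hTm : IsMetacyclic (T : Subgroup (normalizer (R : Set G))) := by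
      refine mc_inj (f := (((normalizer (R : Set G)).subtype.comp
        (T : Subgroup (normalizer (R : Set G))).subtype).codRestrict (S : Subgroup G)
        (fun t => hT _ t.2))) ?_ hmc
      intro x y hxy
      have := congrArg Subtype.val hxy
      ext
      exact this
    obtain ⟨c, hc, Q1, h1, h2, h3⟩ := propB p hp (R.subgroupOf (normalizer (R : Set G))) T hsub
      hne hTm ⟨n, hn⟩
    have hcR' : (c : G) ∈ centralizer (R : Set G) := by
      rw [mem_centralizer_iff] at hc ⊢
      intro x hx
      exact congrArg Subtype.val (hc ⟨x, hRN hx⟩ hx)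
    have hRQ : R ≤ Q1.map (Subgroup.subtype _) := by
      intro x hx
      exact ⟨⟨x, hRN hx⟩, h1.le hx, rfl⟩
    have hRQ' : R < Q1.map (Subgroup.subtype _) := by
      refine lt_of_le_of_ne hRQ ?_
      intro h
      refine h1.not_ge ?_
      intro x hx
      exact h.ge (⟨x, hx, rfl⟩ : (x : G) ∈ Q1.map (Subgroup.subtype _))
    have G1 : Good (S : Subgroup G) R ((c : G) * n) := by
      refine (IH _ ?_ (by rw [← hcR]; exact cardlt hRQ') _ ?_).mono hRQ
      · rintro _ ⟨x, hx, rfl⟩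
        exact hT _ (h2 hx)
      · rintro _ ⟨x, hx, rfl⟩
        have := (Subgroup.mem_normalizer_iff.1 h3 x).1 hx
        exact hT _ (h2 this)
    have h5 : n = (c : G)⁻¹ * (c * n) := by group
    rw [h5]
    refine G1.comp (Q' := R) ?_ (Good.cent (inv_mem hcR'))
    intro q hq
    exact (Subgroup.mem_normalizer_iff.1 (mul_mem c.2 hn) q).1 hq
  -- the other side
  have hN' := normgrow S (hlts g hcjle)
  have hxN : cj (a * g⁻¹) ((S : Subgroup G) ⊓ normalizer (cj g Q : Set G)) ≤
      normalizer (R : Set G) := by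
    intro y hy
    have h1 := (mem_cj.1 hy).2
    have h2 := norm_cj.1 h1
    rw [hR, norm_cj]
    simpa [mul_assoc] using h2
  obtain ⟨n, hn, hn2⟩ := hconj _ (pg_cj (a * g⁻¹)
    (S.2.to_le (inf_le_left : _ ⊓ normalizer (cj g Q : Set G) ≤ _))) hxN
  have Gb : Good (S : Subgroup G) (cj g Q) (n * (a * g⁻¹)) := by
    refine (IH _ inf_le_left (by rw [← card_cj g Q]; exact cardlt hN') _ ?_).mono hN'.le
    intro q hq
    obtain ⟨h1, h2⟩ := hn2 _ (conj_mem_cj hq)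
    have := hT _ h2
    simpa [mul_assoc] using this
  have Gn := main n hn
  have e1 : ∀ q ∈ R, n⁻¹ * q * n ∈ R := by
    intro q hq
    have := (Subgroup.mem_normalizer_iff.1 (inv_mem hn) q).1 hq
    simpa using this
  have Gb' : Good (S : Subgroup G) R (n * (a * g⁻¹))⁻¹ := by
    refine Gb.inv ?_
    intro q hq
    have h1 := e1 q hq
    rw [hR, mem_cj] at h1
    rw [mem_cj]
    simpa [mul_assoc] using h1
  have h6 : g = (n * (a * g⁻¹))⁻¹ * (n * a) := by group
  rw [h6]
  refine Good.comp (Q' := R) (Ga.comp (Q' := R) (fun q hq => hR ▸ conj_mem_cj hq) Gn) ?_ Gb'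
  intro q hq
  have := (Subgroup.mem_normalizer_iff.1 hn (a * q * a⁻¹)).1 (hR ▸ conj_mem_cj hq)
  simpa [mul_assoc] using this

theorem stmt8 {G : Type*} [Group G] [Fintype G] (p : ℕ) [Fact p.Prime] (hp : Odd p)
    (hdvd : p ∣ Fintype.card G) (S : Sylow p G)
    (hmc : IsMetacyclic (S : Subgroup G)) :
    ControlsPFusion (S : Subgroup G) (Subgroup.normalizer ((S : Subgroup G) : Set G)) := by
  intro Q hQ g hg
  exact fuse p hp S hmc _ Q hQ rfl g hg
end

section
/- Let p be an odd prime and let S be a finite noncyclic metacyclic p-group. Then Ω1(S) is elementary abelian of order p², every subgroup of S that is elementary abelian of order p² is equal to Ω1(S), and the index of C_S(Ω1(S)) in S is either 1 or p. -/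
open Subgroup

/-- `Ω₁(S)`: the subgroup generated by the elements of `S` of order dividing `p`. -/
def omega1Grp (p : ℕ) (S : Type*) [Group S] : Subgroup S :=
  Subgroup.closure {g : S | g ^ p = 1}

theorem aux_vec (p : ℕ) [Fact p.Prime] (V : Type*) [AddCommGroup V] [Module (ZMod p) V] [Finite V]
    (hc : Nat.card V = p ^ 2) : Nonempty (V ≃+ ZMod p × ZMod p) := by
  have hfin : Module.Finite (ZMod p) V := Module.Finite.of_finite
  have h1 : Module.finrank (ZMod p) V = 2 := by
    have := Module.natCard_eq_pow_finrank (K := ZMod p) (V := V)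
    rw [Nat.card_zmod, hc] at this
    exact (Nat.pow_right_injective (Fact.out : p.Prime).two_le this).symm
  have h3 : Module.finrank (ZMod p) (ZMod p × ZMod p) = 2 := by simp
  exact ⟨(LinearEquiv.ofFinrankEq (R := ZMod p) V (ZMod p × ZMod p) (h1.trans h3.symm)).toAddEquiv⟩

theorem aux_elem_comm (p : ℕ) [Fact p.Prime] (G : Type*) [CommGroup G] [Finite G]
    (hc : Nat.card G = p ^ 2) (he : ∀ x : G, x ^ p = 1) :
    Nonempty (G ≃* Multiplicative (ZMod p × ZMod p)) := by
  letI : Module (ZMod p) (Additive G) := AddCommGroup.zmodModule (n := p) (by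
    intro x
    exact congrArg Additive.ofMul (he x.toMul))
  obtain ⟨e⟩ := aux_vec p (Additive G) hc
  exact ⟨AddEquiv.toMultiplicativeRight e⟩

theorem aux_elem (p : ℕ) [Fact p.Prime] (G : Type*) [hG : Group G] [Finite G]
    (hc : Nat.card G = p ^ 2) (he : ∀ x : G, x ^ p = 1) :
    Nonempty (G ≃* Multiplicative (ZMod p × ZMod p)) := by
  have hcomm := (IsPGroup.isMulCommutative_of_card_eq_prime_sq hc).is_comm.comm
  exact @aux_elem_comm p _ G { hG with mul_comm := hcomm } _ hc he

theorem aux_cyc (p : ℕ) [Fact p.Prime] (C : Type*) [Group C] [Finite C] [IsCyclic C]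
    [Nontrivial C] (hp : IsPGroup p C) :
    ∃ Q : Subgroup C, Q.Normal ∧ (∀ x, x ∈ Q ↔ x ^ p = 1) ∧ Nat.card Q = p := by
  letI : CommGroup C := IsCyclic.commGroup
  refine ⟨(powMonoidHom p : C →* C).ker, inferInstance, fun x => by simp [MonoidHom.mem_ker], ?_⟩
  rw [IsCyclic.card_powMonoidHom_ker]
  obtain ⟨n, hn, h⟩ := hp.nontrivial_iff_card.mp inferInstance
  rw [h]
  exact Nat.gcd_eq_right (dvd_pow_self p hn.ne')

theorem aux_pow_s10 {G : Type*} [Group G] (u v w : G) (h : v * u = u * v * w)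
    (hu : w * u = u * w) (hv : w * v = v * w) (n : ℕ) :
    (u * v) ^ n = u ^ n * v ^ n * w ^ (n.choose 2) := by
  have hcu : Commute w u := hu
  have hcv : Commute w v := hv
  have h1 : ∀ n : ℕ, v ^ n * u = u * v ^ n * w ^ n := by
    intro n
    induction n with
    | zero => simp
    | succ k ih =>
      calc v ^ (k+1) * u = v ^ k * (v * u) := by rw [pow_succ]; group
        _ = (v ^ k * u) * v * w := by rw [h]; group
        _ = u * v ^ k * (w ^ k * v) * w := by rw [ih]; group
        _ = u * v ^ (k+1) * w ^ (k+1) := by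
            rw [(hcv.pow_left k).eq, pow_succ v, pow_succ w]; group
  induction n with
  | zero => simp
  | succ k ih =>
    have e : (k+1).choose 2 = k + k.choose 2 := by
      rw [Nat.choose_succ_succ' k 1]; simp
    rw [pow_succ, ih, e, pow_add w]
    have c1 : w ^ (k.choose 2) * (u * v) = (u * v) * w ^ (k.choose 2) :=
      ((hcu.mul_right hcv).pow_left _).eq
    calc u ^ k * v ^ k * w ^ k.choose 2 * (u * v)
        = u ^ k * v ^ k * (w ^ k.choose 2 * (u * v)) := by group
      _ = u ^ k * (v ^ k * u) * v * w ^ k.choose 2 := by rw [c1]; simp only [mul_assoc]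
      _ = u ^ k * u * v ^ k * (w ^ k * v) * w ^ k.choose 2 := by
          rw [h1]; simp only [mul_assoc]
      _ = _ := by
          rw [(hcv.pow_left k).eq, pow_succ u, pow_succ v]; simp only [mul_assoc]

theorem aux_num (p : ℕ) [Fact p.Prime] (hodd : Odd p) (m : ℕ) (hm : m ≠ 0) (r : ℤ)
    (h : (p : ℤ) ^ m ∣ r ^ p - 1) : (p : ℤ) ∣ r - 1 ∧ (p : ℤ) ^ m ∣ p * (r - 1) := by
  have hp : p.Prime := Fact.out
  have h1 : (p : ℤ) ∣ r ^ p - 1 := (dvd_pow_self _ hm).trans h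
  have h2 : (p : ℤ) ∣ r - 1 := by
    rw [← ZMod.intCast_zmod_eq_zero_iff_dvd] at h1 ⊢
    push_cast at h1 ⊢
    rwa [ZMod.pow_card] at h1
  refine ⟨h2, ?_⟩
  have h3 : ¬ (p : ℤ) ∣ r := by
    intro h4
    have h5 : (p : ℤ) ∣ 1 := by simpa using dvd_sub h4 h2
    exact hp.one_lt.ne' (by exact_mod_cast Int.eq_one_of_dvd_one (by positivity) h5)
  have h6 := Int.emultiplicity_pow_sub_pow hp hodd (x := r) (y := 1) h2 h3 p
  have h7 : emultiplicity (p : ℤ) (p * (r - 1)) = emultiplicity (p : ℤ) (r ^ p - 1) := by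
    rw [one_pow] at h6
    rw [h6, emultiplicity_mul (Nat.prime_iff_prime_int.mp hp), add_comm, Int.natCast_emultiplicity]
  rw [pow_dvd_iff_le_emultiplicity] at h ⊢
  rwa [h7]

/-- Action of an element `u` with `u ^ p ∈ N` on a cyclic normal subgroup. -/
theorem aux_act (p : ℕ) [Fact p.Prime] (hodd : Odd p) (T : Type*) [Group T] [Finite T]
    (hp : IsPGroup p T) (N : Subgroup T) [N.Normal] [IsCyclic N] (u : T) (hu : u ^ p ∈ N) :
    (∀ x ∈ N, (u * x * u⁻¹ * x⁻¹) ^ p = 1) ∧ (∀ x ∈ N, x ^ p = 1 → u * x * u⁻¹ = x) := by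
  by_cases hN : N = ⊥
  · subst hN
    constructor <;> intro x hx <;> simp [Subgroup.mem_bot.mp hx]
  obtain ⟨⟨a, haN⟩, ha⟩ := IsCyclic.exists_generator (α := N)
  have hgen : ∀ x ∈ N, ∃ k : ℤ, a ^ k = x := by
    intro x hx
    obtain ⟨k, hk⟩ := Subgroup.mem_zpowers_iff.mp (ha ⟨x, hx⟩)
    exact ⟨k, by simpa using congrArg Subtype.val hk⟩
  have hane : a ≠ 1 := by
    rintro rfl
    apply hN
    rw [eq_bot_iff]
    intro x hx
    obtain ⟨k, hk⟩ := hgen x hx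
    simp at hk
    simp [← hk]
  obtain ⟨m, hm⟩ := IsPGroup.iff_orderOf.mp hp a
  have hm0 : m ≠ 0 := by
    rintro rfl
    simp at hm
    exact hane hm
  obtain ⟨r, hr⟩ := hgen (u * a * u⁻¹) (Subgroup.Normal.conj_mem inferInstance a haN u)
  have hpow : ∀ k : ℤ, u * a ^ k * u⁻¹ = a ^ (r * k) := by
    intro k
    rw [zpow_mul, hr, conj_zpow]
  have hiter : ∀ n : ℕ, u ^ n * a * (u ^ n)⁻¹ = a ^ (r ^ n) := by
    intro n
    induction n with
    | zero => simp
    | succ k ih =>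
      have : u ^ (k+1) * a * (u ^ (k+1))⁻¹ = u * (u ^ k * a * (u ^ k)⁻¹) * u⁻¹ := by
        rw [pow_succ']; group
      rw [this, ih, hpow, pow_succ']
  have hfix : a ^ (r ^ p - 1) = 1 := by
    rw [zpow_sub, ← hiter p, zpow_one]
    obtain ⟨k, hk⟩ := hgen _ hu
    rw [← hk]; group
  have hdvd : (p : ℤ) ^ m ∣ r ^ p - 1 := by
    have := orderOf_dvd_iff_zpow_eq_one.mpr hfix
    rw [hm] at this
    exact_mod_cast this
  obtain ⟨h1, h2⟩ := aux_num p hodd m hm0 r hdvd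
  constructor
  · intro x hx
    obtain ⟨k, rfl⟩ := hgen x hx
    rw [hpow, ← zpow_neg, ← zpow_add, ← zpow_natCast, ← zpow_mul, ← orderOf_dvd_iff_zpow_eq_one, hm]
    push_cast
    have : (r * k + -k) * p = (p * (r - 1)) * k := by ring
    rw [this]
    exact h2.mul_right k
  · intro x hx hxp
    obtain ⟨k, rfl⟩ := hgen x hx
    obtain ⟨q, hq⟩ := h1
    have : r * k = k + k * p * q := by
      have : r = 1 + p * q := by linarith
      rw [this]; ring
    rw [hpow, this, zpow_add, zpow_mul, zpow_mul, zpow_natCast, hxp]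
    simp

theorem aux_T (p : ℕ) [Fact p.Prime] (hodd : Odd p) (T : Type*) [Group T] [Finite T]
    (hp : IsPGroup p T) (hnc : ¬ IsCyclic T) (N : Subgroup T) [N.Normal] [IsCyclic N]
    (hi : N.index = p) :
    ∃ K : Subgroup T, (∀ x, x ∈ K ↔ x ^ p = 1) ∧ Nat.card K = p ^ 2 := by
  have hpp : p.Prime := Fact.out
  have hup : ∀ u : T, u ^ p ∈ N := by
    intro u
    rw [← hi]
    exact N.pow_index_mem u
  have hact := fun u => aux_act p hodd T hp N u (hup u)
  have hquot : ∀ u v : T, u ∉ N → ∃ k : ℤ, ∃ n ∈ N, v = u ^ k * n := by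
    intro u v hu
    have hcard : Nat.card (T ⧸ N) = p := hi
    have hne : (u : T ⧸ N) ≠ 1 := by
      rwa [Ne, QuotientGroup.eq_one_iff]
    have := mem_zpowers_of_prime_card (g' := (v : T ⧸ N)) hcard hne
    obtain ⟨k, hk⟩ := Subgroup.mem_zpowers_iff.mp this
    refine ⟨k, (u ^ k)⁻¹ * v, ?_, by group⟩
    rw [← QuotientGroup.mk_zpow] at hk
    exact QuotientGroup.eq.mp hk
  -- commutators
  have hZconj : ∀ g x : T, x ∈ N → x ^ p = 1 → g * x = x * g := by
    intro g x hx hxp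
    have := (hact g).2 x hx hxp
    rwa [mul_inv_eq_iff_eq_mul] at this
  have hconjN : ∀ g n : T, n ∈ N → g * n * g⁻¹ ∈ N := fun g n hn =>
    Subgroup.Normal.conj_mem inferInstance n hn g
  have hcomm : ∀ u v : T, ∃ w ∈ N, w ^ p = 1 ∧ v * u = u * v * w := by
    intro u v
    have key : ∀ g n : T, n ∈ N → ∃ w ∈ N, w ^ p = 1 ∧ g * n = n * g * w := by
      intro g n hn
      have h1 := (hact g).1 n hn
      have h2 : g * n * g⁻¹ * n⁻¹ ∈ N := N.mul_mem (hconjN g n hn) (N.inv_mem hn)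
      refine ⟨_, h2, h1, ?_⟩
      rw [hZconj (n * g) _ h2 h1]; group
    by_cases hv : v ∈ N
    · obtain ⟨w, hw, hwp, h⟩ := key u v hv
      refine ⟨w⁻¹, N.inv_mem hw, by simp [hwp], ?_⟩
      rw [h]; group
    · obtain ⟨k, n, hn, rfl⟩ := hquot v u hv
      obtain ⟨w, hw, hwp, h⟩ := key v n hn
      refine ⟨w, hw, hwp, ?_⟩
      calc v * (v ^ k * n) = v ^ k * (v * n) := by group
        _ = _ := by rw [h]; group
  have hmul : ∀ u v : T, (u * v) ^ p = u ^ p * v ^ p := by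
    intro u v
    obtain ⟨w, hw, hwp, h⟩ := hcomm u v
    rw [aux_pow_s10 u v w h (hZconj u w hw hwp).symm (hZconj v w hw hwp).symm]
    have : p ∣ p.choose 2 := by
      apply hpp.dvd_choose_self (by norm_num)
      rcases hodd with ⟨k, hk⟩
      have := hpp.two_le
      omega
    obtain ⟨q, hq⟩ := this
    rw [hq, pow_mul, hwp]; simp
  let f : T →* T := { toFun := fun x => x ^ p, map_one' := one_pow _, map_mul' := hmul }
  have hf : ∀ x, f x = x ^ p := fun x => rfl
  refine ⟨f.ker, fun x => by rw [MonoidHom.mem_ker, hf], ?_⟩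
  have hNt : Nontrivial N := by
    rw [Subgroup.nontrivial_iff_ne_bot]
    rintro rfl
    rw [Subgroup.index_bot] at hi
    exact hnc (isCyclic_of_prime_card hi)
  obtain ⟨Q, -, hQ, hQc⟩ := aux_cyc p N (hp.to_subgroup N)
  have hrange : N.map f = f.range := by
    apply le_antisymm
    · rintro _ ⟨x, -, rfl⟩; exact ⟨x, rfl⟩
    rintro _ ⟨t, rfl⟩
    by_cases ht : t ∈ N
    · exact ⟨t, ht, rfl⟩
    by_contra hcon
    -- `t ^ p` generates `N`
    obtain ⟨⟨a, haN⟩, ha⟩ := IsCyclic.exists_generator (α := N)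
    obtain ⟨k, hk⟩ := Subgroup.mem_zpowers_iff.mp (ha ⟨t ^ p, hup t⟩)
    replace hk : a ^ k = t ^ p := by simpa using congrArg Subtype.val hk
    have hkp : ¬ (p : ℤ) ∣ k := by
      rintro ⟨q, rfl⟩
      apply hcon
      refine ⟨a ^ q, N.zpow_mem haN q, ?_⟩
      rw [hf, hf, ← hk, mul_comm, zpow_mul, zpow_natCast]
    obtain ⟨m, hm⟩ := IsPGroup.iff_orderOf.mp hp a
    have hcop : IsCoprime k ((p : ℤ) ^ m) := by
      apply IsCoprime.pow_right
      exact ((Nat.prime_iff_prime_int.mp hpp).coprime_iff_not_dvd.mpr hkp).symm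
    obtain ⟨x, y, hxy⟩ := hcop
    have hat : a = (t ^ p) ^ x := by
      have h1 : a ^ ((p : ℤ) ^ m) = 1 := by
        rw [← orderOf_dvd_iff_zpow_eq_one, hm]; push_cast; rfl
      calc a = a ^ (x * k + y * (p : ℤ) ^ m) := by rw [hxy, zpow_one]
        _ = _ := by rw [zpow_add, mul_comm x, mul_comm y, zpow_mul, zpow_mul, h1, hk]; simp
    apply hnc
    refine ⟨t, fun g => ?_⟩
    obtain ⟨j, n, hn, rfl⟩ := hquot t g ht
    obtain ⟨l, hl⟩ := Subgroup.mem_zpowers_iff.mp (ha ⟨n, hn⟩)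
    replace hl : a ^ l = n := by simpa using congrArg Subtype.val hl
    have hat' : a ∈ Subgroup.zpowers t := by
      rw [hat]
      exact Subgroup.zpow_mem _ (Subgroup.pow_mem _ (Subgroup.mem_zpowers t) _) _
    rw [← hl]
    exact Subgroup.mul_mem _ (Subgroup.zpow_mem _ (Subgroup.mem_zpowers t) _)
      (Subgroup.zpow_mem _ hat' _)
  have h1 : f.ker.relIndex N = f.ker.index := by
    rw [Subgroup.relIndex_ker, Subgroup.index_ker, hrange]
  have h2 : Nat.card (f.ker.subgroupOf N) = p := by
    have : f.ker.subgroupOf N = Q := by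
      ext x
      rw [hQ, Subgroup.mem_subgroupOf, MonoidHom.mem_ker, hf, Subtype.ext_iff]
      simp
    rw [this, hQc]
  have h3 := (f.ker.subgroupOf N).card_mul_index
  have h4 := f.ker.card_mul_index
  have h5 := N.card_mul_index
  change _ * f.ker.relIndex N = _ at h3
  rw [h2, h1] at h3
  rw [hi, ← h3, ← h4] at h5
  have h6 : f.ker.index ≠ 0 := Subgroup.index_ne_zero_of_finite
  apply Nat.eq_of_mul_eq_mul_right (Nat.pos_of_ne_zero h6)
  rw [← h5]; ring

theorem aux_index (p : ℕ) [Fact p.Prime] (S : Type*) [Group S] [Finite S]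
    (hp : IsPGroup p S) (K : Subgroup S) [K.Normal] (hK : Nat.card K = p ^ 2) :
    (Subgroup.centralizer (K : Set S)).index ∈ ({1, p} : Set ℕ) := by
  have hpp : p.Prime := Fact.out
  letI : MulAction S K := MulAction.compHom K (MulAut.conjNormal : S →* MulAut K)
  have hsm : ∀ (g : S) (k : K), ((g • k : K) : S) = g * k * g⁻¹ := by
    intro g k
    exact MulAut.conjNormal_apply g k
  have hst : ∀ (g : S) (k : K), g • k = k ↔ g * k = k * g := by
    intro g k
    rw [Subtype.ext_iff, hsm, mul_inv_eq_iff_eq_mul]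
  by_cases hcen : K ≤ Subgroup.center S
  · left
    rw [Subgroup.index_eq_one, Subgroup.centralizer_eq_top_iff_subset]
    exact hcen
  right
  obtain ⟨y, hyK, hy⟩ := Set.not_subset.mp hcen
  have h1 : (1 : K) ∈ MulAction.fixedPoints S K := by
    intro g
    rw [hst]; simp
  obtain ⟨z, hz, hz1⟩ := hp.exists_fixed_point_of_prime_dvd_card_of_fixed_point K
    (by rw [hK]; exact dvd_pow_self p two_ne_zero) h1
  have heq : Subgroup.centralizer (K : Set S) = MulAction.stabilizer S (⟨y, hyK⟩ : K) := by
    ext g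
    rw [MulAction.mem_stabilizer_iff, hst, Subgroup.mem_centralizer_iff]
    constructor
    · intro h; exact (h y hyK).symm
    · intro h
      let D : Subgroup K := (Subgroup.centralizer {g}).subgroupOf K
      let Z : Subgroup K := (Subgroup.center S).subgroupOf K
      have hmD : ∀ x : K, x ∈ D ↔ g * x = x * g := by
        intro x
        rw [Subgroup.mem_subgroupOf, Subgroup.mem_centralizer_singleton_iff]
        exact eq_comm
      have hZD : Z < D := by
        refine lt_of_le_of_ne ?_ ?_
        · intro x hx
          rw [hmD]
          exact Subgroup.mem_center_iff.mp hx g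
        · intro h'
          have : (⟨y, hyK⟩ : K) ∈ Z := by rw [h', hmD]; exact h
          exact hy this
      have hZ : Z ≠ ⊥ := by
        intro h'
        have : z ∈ Z := by
          rw [Subgroup.mem_subgroupOf, Subgroup.mem_center_iff]
          intro g'
          exact (hst g' z).mp (hz g')
        rw [h', Subgroup.mem_bot] at this
        exact hz1 this.symm
      obtain ⟨i, hi, hZc⟩ := (Nat.dvd_prime_pow hpp).mp (hK ▸ Z.card_subgroup_dvd_card)
      obtain ⟨j, hj, hDc⟩ := (Nat.dvd_prime_pow hpp).mp (hK ▸ D.card_subgroup_dvd_card)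
      have hi0 : i ≠ 0 := by
        rintro rfl
        rw [pow_zero, Subgroup.card_eq_one] at hZc
        exact hZ hZc
      have hlt : Nat.card Z < Nat.card D := by
        refine lt_of_le_of_ne (Subgroup.card_le_of_le hZD.le) fun h' => ?_
        exact hZD.ne (Subgroup.eq_of_le_of_card_ge hZD.le h'.ge)
      rw [hZc, hDc] at hlt
      have := (Nat.pow_lt_pow_iff_right hpp.one_lt).mp hlt
      have hj2 : j = 2 := by omega
      have hDtop : D = ⊤ := by
        apply Subgroup.eq_top_of_card_eq
        rw [hDc, hK, hj2]
      intro x hx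
      have : (⟨x, hx⟩ : K) ∈ D := by rw [hDtop]; trivial
      exact ((hmD _).mp this).symm
  have hidx : (Subgroup.centralizer (K : Set S)).index < p ^ 2 := by
    rw [heq, MulAction.index_stabilizer, ← hK]
    have : MulAction.orbit S (⟨y, hyK⟩ : K) ⊂ Set.univ := by
      rw [Set.ssubset_univ_iff]
      intro h
      have h1 : (1 : K) ∈ MulAction.orbit S (⟨y, hyK⟩ : K) := by rw [h]; trivial
      obtain ⟨g, hg⟩ := h1
      have hg' := congrArg Subtype.val hg
      change ((g • (⟨y, hyK⟩ : K) : K) : S) = 1 at hg'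
      rw [hsm, conj_eq_one_iff] at hg'
      apply hy
      change y = 1 at hg'
      rw [hg']
      exact Subgroup.one_mem _
    have := Set.ncard_lt_ncard this
    rwa [Set.ncard_univ] at this
  have hne : (Subgroup.centralizer (K : Set S)).index ≠ 1 := by
    rw [Ne, Subgroup.index_eq_one, Subgroup.centralizer_eq_top_iff_subset]
    exact hcen
  obtain ⟨n, hn⟩ := hp.index (Subgroup.centralizer (K : Set S))
  rw [hn] at hidx hne ⊢
  have h2 := (Nat.pow_lt_pow_iff_right hpp.one_lt).mp hidx
  have h0 : n ≠ 0 := by rintro rfl; simp at hne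
  have : n = 1 := by omega
  simp [this]

theorem aux_main (p : ℕ) [Fact p.Prime] (hodd : Odd p) (S : Type*) [Group S] [Finite S]
    (hpS : IsPGroup p S) (hnc : ¬IsCyclic S) (hmc : IsMetacyclic S) :
    ∃ K : Subgroup S, (∀ x, x ∈ K ↔ x ^ p = 1) ∧ Nat.card K = p ^ 2 := by
  have hpp : p.Prime := Fact.out
  let P : Subgroup S → Prop := fun N => ∃ _ : N.Normal, IsCyclic N ∧ IsCyclic (S ⧸ N)
  obtain ⟨N, hN, hmax⟩ : ∃ N, P N ∧ ∀ M, P M → N ≤ M → M = N := by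
    obtain ⟨N, hN⟩ := Set.Finite.exists_maximal (s := {N | P N}) (Set.toFinite _) hmc
    exact ⟨N, hN.1, fun M hM h => le_antisymm (hN.2 hM h) h⟩
  obtain ⟨hNn, hNc, hQc⟩ := hN
  have hnt : Nontrivial (S ⧸ N) := by
    rw [QuotientGroup.nontrivial_iff]
    rintro rfl
    exact hnc (isCyclic_of_surjective (Subgroup.topEquiv : (⊤ : Subgroup S) ≃* S)
      (Subgroup.topEquiv).surjective)
  obtain ⟨Q, hQn, hQ, hQcard⟩ := aux_cyc p (S ⧸ N) (hpS.to_quotient N)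
  let T : Subgroup S := Q.comap (QuotientGroup.mk' N)
  have hNT : N ≤ T := by
    intro x hx
    rw [Subgroup.mem_comap, QuotientGroup.mk'_apply, (QuotientGroup.eq_one_iff x).mpr hx]
    exact Q.one_mem
  have hTn : T.Normal := hQn.comap _
  have hrel : N.relIndex T = p := by
    have h1 := Subgroup.relIndex_mul_index hNT
    have h2 : T.index = Q.index :=
      Subgroup.index_comap_of_surjective Q (QuotientGroup.mk'_surjective N)
    have h3 := Q.card_mul_index
    rw [hQcard] at h3
    change _ = Nat.card (S ⧸ N) at h1
    rw [← h3, h2] at h1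
    exact Nat.eq_of_mul_eq_mul_right (Nat.pos_of_ne_zero Subgroup.index_ne_zero_of_finite) h1
  have hTnc : ¬ IsCyclic T := by
    intro hTc
    have hq : IsCyclic (S ⧸ T) := by
      refine isCyclic_of_surjective (QuotientGroup.map N T (MonoidHom.id S) hNT) ?_
      intro x
      obtain ⟨s, rfl⟩ := QuotientGroup.mk_surjective x
      exact ⟨(s : S ⧸ N), rfl⟩
    have := hmax T ⟨hTn, hTc, hq⟩ hNT
    rw [this, Subgroup.relIndex_self] at hrel
    exact hpp.one_lt.ne hrel
  haveI : IsCyclic (N.subgroupOf T) :=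
    isCyclic_of_surjective (Subgroup.subgroupOfEquivOfLe hNT).symm
      (Subgroup.subgroupOfEquivOfLe hNT).symm.surjective
  obtain ⟨K, hK, hKc⟩ := aux_T p hodd T (hpS.to_subgroup T) hTnc (N.subgroupOf T) hrel
  refine ⟨K.map T.subtype, fun x => ?_, ?_⟩
  · constructor
    · rintro ⟨y, hy, rfl⟩
      have := congrArg Subtype.val ((hK y).mp hy)
      simpa using this
    · intro hx
      have hxT : x ∈ T := by
        rw [Subgroup.mem_comap, hQ, ← map_pow, hx, map_one]
      exact ⟨⟨x, hxT⟩, (hK _).mpr (Subtype.ext hx), rfl⟩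
  · rw [Subgroup.card_map_of_injective T.subtype_injective, hKc]

theorem stmt10 (p : ℕ) [Fact p.Prime] (hodd : Odd p) (S : Type*) [Group S] [Finite S]
    (hpS : IsPGroup p S) (hnc : ¬IsCyclic S) (hmc : IsMetacyclic S) :
    Nonempty (omega1Grp p S ≃* Multiplicative (ZMod p × ZMod p)) ∧
      (∀ E : Subgroup S, Nonempty (E ≃* Multiplicative (ZMod p × ZMod p)) →
        E = omega1Grp p S) ∧
      (Subgroup.centralizer ((omega1Grp p S : Subgroup S) : Set S)).index ∈
        ({1, p} : Set ℕ) := by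
  obtain ⟨K, hK, hKc⟩ := aux_main p hodd S hpS hnc hmc
  have hom : omega1Grp p S = K := by
    have : {g : S | g ^ p = 1} = (K : Set S) := by
      ext x; exact (hK x).symm
    rw [omega1Grp, this, Subgroup.closure_eq]
  rw [hom]
  have hKn : K.Normal := ⟨fun n hn g => by
    rw [hK] at hn ⊢
    rw [conj_pow, hn]; simp⟩
  refine ⟨aux_elem p K hKc fun x => Subtype.ext ((hK x).mp x.2), ?_, aux_index p S hpS K hKc⟩
  rintro E ⟨e⟩
  have hEc : Nat.card E = p ^ 2 := by
    rw [Nat.card_congr e.toEquiv, Nat.card_congr Multiplicative.toAdd, Nat.card_prod,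
      Nat.card_zmod, sq]
  apply Subgroup.eq_of_le_of_card_ge
  · intro x hx
    rw [hK]
    have h1 : (⟨x, hx⟩ : E) ^ p = 1 := by
      apply e.injective
      rw [map_pow, map_one]
      apply Multiplicative.toAdd.injective
      rw [toAdd_pow, toAdd_one]
      ext <;> simp
    simpa using congrArg Subtype.val h1
  · rw [hKc, hEc]
end
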